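/- Let d, k ≥ 1 be integers and θ ∈ (0,1). There exists a constant C = C(θ, k, d) such that for all x, y ∈ 𝕊^k with x + e₁₁ ∈ 𝕊^k and all t ≥ 0, |p_t^ℓ(x,y) − p_t^ℓ(x + e₁₁, y)| ≤ C (√t + 1)^{−(kd+θ)}. -/

import Mathlib

open scoped Classical

noncomputable section

namespace SSEPPaper

/-- Configurations of `k` labelled particles on `ℤ^d`. -/
abbrev Conf (d k : ℕ) := Fin k → Fin d → ℤ

/-- Euclidean norm of an integer vector in `ℤ^d`. -/
def vnorm {d : ℕ} (v : Fin d → ℤ) : ℝ := Real.sqrt (∑ j, ((v j : ℝ)) ^ 2)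

/-- Euclidean norm on `(ℝ^d)^k` of an integer configuration. -/
def cnorm {d k : ℕ} (x : Conf d k) : ℝ := Real.sqrt (∑ i, ∑ j, ((x i j : ℝ)) ^ 2)

/-- The set `𝕊^k` of configurations with pairwise distinct particle positions. -/
def SSet (d k : ℕ) : Set (Conf d k) := {x | ∀ i j : Fin k, i ≠ j → x i ≠ x j}

/-- Swap of the coordinates `i` and `j` of a configuration, i.e. `σ^{i,j}x`. -/
def cswap {d k : ℕ} (i j : Fin k) (x : Conf d k) : Conf d k := x ∘ Equiv.swap i j

/-- `δ^{i,j}w`: the configuration which agrees with `w` except that its `j`-th coordinate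
is replaced by `w i`. -/
def cdelta {d k : ℕ} (i j : Fin k) (w : Conf d k) : Conf d k := Function.update w j (w i)

/-- Kronecker delta function at `y`. -/
def deltaFn {α : Type*} (y : α) : α → ℝ := fun x => if x = y then 1 else 0

/-- Generator of the labelled exclusion process, extended to all of `(ℤ^d)^k`. -/
def Lexc {d k : ℕ} (f : Conf d k → ℝ) : Conf d k → ℝ := fun x =>
  (∑' y : Conf d k, if cnorm (y - x) = 1 ∧ y ∈ SSet d k then f y - f x else 0) +
    ∑ i : Fin k, ∑ j : Fin k,
      if i < j ∧ vnorm (x i - x j) = 1 ∧ x ∈ SSet d k then f (cswap i j x) - f x else 0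

/-- Generator of `k` independent simple random walks on `ℤ^d`. -/
def Lrw {d k : ℕ} (f : Conf d k → ℝ) : Conf d k → ℝ := fun x =>
  ∑' z : Conf d k, if cnorm (z - x) = 1 then f z - f x else 0

/-- Generator (discrete Laplacian) of a single simple random walk on `ℤ^d`. -/
def Lap {d : ℕ} (f : (Fin d → ℤ) → ℝ) : (Fin d → ℤ) → ℝ := fun x =>
  ∑' y : Fin d → ℤ, if vnorm (y - x) = 1 then f y - f x else 0

/-- Transition probabilities `p_t^ℓ(x,y) = (e^{tL^ℓ} δ_y)(x)` of the labelled exclusion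
process, given by the exponential power series of the generator. -/
def ptl {d k : ℕ} (t : ℝ) (x y : Conf d k) : ℝ :=
  ∑' n : ℕ, t ^ n / n.factorial * ((Lexc (d := d) (k := k))^[n] (deltaFn y)) x

/-- Transition probabilities `p_t^{rw}(x,y) = (e^{tL^{rw}} δ_y)(x)` of `k` independent
simple random walks on `ℤ^d`. -/
def ptrw {d k : ℕ} (t : ℝ) (x y : Conf d k) : ℝ :=
  ∑' n : ℕ, t ^ n / n.factorial * ((Lrw (d := d) (k := k))^[n] (deltaFn y)) x

/-- Transition probabilities `p_t(x,y) = (e^{tΔ} δ_y)(x)` of a single continuous-time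
simple random walk on `ℤ^d`. -/
def pt1 {d : ℕ} (t : ℝ) (x y : Fin d → ℤ) : ℝ :=
  ∑' n : ℕ, t ^ n / n.factorial * ((Lap (d := d))^[n] (deltaFn y)) x

/-- The configuration `e₁₁ = ((1,0,…,0),(0,…,0),…,(0,…,0))`. -/
def e11 (d k : ℕ) : Conf d k := fun i j => if i.val = 0 ∧ j.val = 0 then 1 else 0

section SpecSeq

/-- Elementary facts on completely monotone sequences. -/
lemma seq_d1 (γ : ℕ → ℝ) (h0 : ∀ j, 0 ≤ γ j) (h2 : ∀ j, 0 ≤ γ j - 2 * γ (j+1) + γ (j+2)) (j : ℕ) :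
    ((j:ℝ)+1) * (γ j - γ (j+1)) ≤ γ 0 := by
  have key : ∀ j : ℕ, ((j:ℝ)+1) * (γ j - γ (j+1)) ≤ γ 0 - γ (j+1) := by
    intro j
    induction j with
    | zero => simp
    | succ n ih =>
      have := h2 n
      push_cast
      have h3 : ((n:ℝ)+1) * (γ (n+1) - γ (n+1+1)) ≤ ((n:ℝ)+1) * (γ n - γ (n+1)) := by
        apply mul_le_mul_of_nonneg_left _ (by positivity)
        show γ (n+1) - γ (n+2) ≤ _
        linarith
      linarith
  have := key j
  have := h0 (j+1)
  linarith

lemma seq_d2 (γ : ℕ → ℝ) (h0 : ∀ j, 0 ≤ γ j) (h1 : ∀ j, 0 ≤ γ j - γ (j+1))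
    (h2 : ∀ j, 0 ≤ γ j - 2 * γ (j+1) + γ (j+2))
    (h3 : ∀ j, 0 ≤ γ j - 3 * γ (j+1) + 3 * γ (j+2) - γ (j+3)) (j : ℕ) :
    ((j:ℝ)+1)^2 * (γ (2*j) - 2 * γ (2*j+1) + γ (2*j+2)) ≤ γ 0 := by
  have a := seq_d1 (fun i => γ (j+i) - γ (j+i+1)) (fun i => h1 _) (fun i => by
    have := h3 (j+i)
    simp only [← add_assoc] at *
    show 0 ≤ γ (j+i) - γ (j+i+1) - 2 * (γ (j+i+1) - γ (j+i+2)) + (γ (j+i+2) - γ (j+i+3))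
    linarith) j
  have b := seq_d1 γ h0 h2 j
  simp only [add_zero, ← add_assoc, ← two_mul] at a
  have e : γ (2*j) - 2 * γ (2*j+1) + γ (2*j+2) = γ (2 * j) - γ (2 * j + 1) - (γ (2 * j + 1) - γ (2 * j + 1 + 1)) := by
    ring_nf
  rw [e]
  calc _ = ((j:ℝ)+1) * (((j:ℝ)+1) * (γ (2 * j) - γ (2 * j + 1) - (γ (2 * j + 1) - γ (2 * j + 1 + 1)))) := by ring
    _ ≤ ((j:ℝ)+1) * (γ j - γ (j+1)) := by
        apply mul_le_mul_of_nonneg_left a (by positivity)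
    _ ≤ _ := b

variable {V : Type*} [AddCommGroup V] [Module ℝ V] (B : V →ₗ[ℝ] V →ₗ[ℝ] ℝ) (K : Module.End ℝ V)

lemma spec_pow (hK : ∀ u v, B (K u) v = B u (K v)) (n : ℕ) (u v : V) :
    B ((K^n) u) v = B u ((K^n) v) := by
  induction n generalizing u v with
  | zero => simp
  | succ n ih => rw [pow_succ, Module.End.mul_apply, ih, hK, ← Module.End.mul_apply, ← pow_succ', pow_succ]

lemma spec_main (hB : ∀ u, 0 ≤ B u u) 
    (hK : ∀ u v, B (K u) v = B u (K v)) (hK0 : ∀ u, 0 ≤ B (K u) u) (hK1 : ∀ u, B (K u) u ≤ B u u)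
    (f : V) (n : ℕ) :
    ((2*n:ℝ)+1) * (B ((K^n) f) ((K^n) f) - B (K ((K^n) f)) ((K^n) f)) ≤ B f f ∧
    ((n:ℝ)+1)^2 * B ((K^n) f - K ((K^n) f)) ((K^n) f - K ((K^n) f)) ≤ B f f ∧
    B ((K^(n+1)) f) ((K^(n+1)) f) ≤ B ((K^n) f) ((K^n) f) := by
  set γ : ℕ → ℝ := fun j => B ((K^j) f) f with hγ
  have hp := spec_pow B K hK
  have hij : ∀ i j, B ((K^i) f) ((K^j) f) = γ (i+j) := by
    intro i j
    rw [← hp, ← Module.End.mul_apply, ← pow_add, add_comm]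
  have hKs : ∀ j, K ((K^j) f) = (K^(j+1)) f := by
    intro j; rw [pow_succ']; rfl
  have hq1 : ∀ u, 0 ≤ B (K u) u - B (K u) (K u) := by
    intro u
    have a := hK0 (u - K u)
    have b := hK1 (K u)
    have c1 := hK (K u) u
    have c2 := hK (K u) (K u)
    have c3 := hK u u
    have c4 := hK u (K u)
    simp only [map_sub, LinearMap.sub_apply] at a
    linarith
  have e0 : ∀ j, 0 ≤ γ j := by
    intro j
    rcases Nat.even_or_odd' j with ⟨i, rfl | rfl⟩
    · rw [two_mul, ← hij]; exact hB _
    · have := hK0 ((K^i) f)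
      rw [hKs, hij] at this
      convert this using 2; ring
  have e1 : ∀ j, 0 ≤ γ j - γ (j+1) := by
    intro j
    rcases Nat.even_or_odd' j with ⟨i, rfl | rfl⟩
    · have := hK1 ((K^i) f)
      rw [hKs, hij, hij] at this
      rw [show 2*i = i+i by ring, show i+i+1 = i+1+i by ring]; linarith
    · have := hq1 ((K^i) f)
      rw [hKs, hij, hij] at this
      rw [show 2*i+1 = i+1+i by ring, show i+1+i+1 = i+1+(i+1) by ring]; linarith
  have e2 : ∀ j, 0 ≤ γ j - 2 * γ (j+1) + γ (j+2) := by
    intro j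
    rcases Nat.even_or_odd' j with ⟨i, rfl | rfl⟩
    · have := hB ((K^i) f - K ((K^i) f))
      simp only [map_sub, LinearMap.sub_apply, hKs, hij] at this
      ring_nf at this ⊢; linarith
    · have := hK0 ((K^i) f - K ((K^i) f))
      simp only [map_sub, LinearMap.sub_apply, hKs, hij] at this
      ring_nf at this ⊢; linarith
  have e3 : ∀ j, 0 ≤ γ j - 3 * γ (j+1) + 3 * γ (j+2) - γ (j+3) := by
    intro j
    rcases Nat.even_or_odd' j with ⟨i, rfl | rfl⟩
    · have := hK1 ((K^i) f - K ((K^i) f))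
      simp only [map_sub, LinearMap.sub_apply, hKs, hij] at this
      ring_nf at this ⊢; linarith
    · have := hq1 ((K^i) f - K ((K^i) f))
      simp only [map_sub, LinearMap.sub_apply, hKs, hij] at this
      ring_nf at this ⊢; linarith
  have g0 : γ 0 = B f f := by simp [hγ]
  refine ⟨?_, ?_, ?_⟩
  · have := seq_d1 γ e0 e2 (2*n)
    rw [hKs, hij, hij, ← g0]
    push_cast at this
    rwa [show n+n = 2*n by ring, show n+1+n = 2*n+1 by ring]
  · have := seq_d2 γ e0 e1 e2 e3 n
    simp only [map_sub, LinearMap.sub_apply, hKs, hij]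
    rw [← g0]
    refine le_trans (le_of_eq ?_) this
    ring_nf
  · rw [hij, hij]
    have := e1 (2*n)
    have := e1 (2*n+1)
    ring_nf at *
    linarith

end SpecSeq

/-- finitely supported functions -/
def FSm (X : Type*) : Submodule ℝ (X → ℝ) where
  carrier := {u | (Function.support u).Finite}
  add_mem' := by
    intro a b ha hb
    exact (ha.union hb).subset (Function.support_add a b)
  zero_mem' := by simp
  smul_mem' := by
    intro c u hu
    exact hu.subset (Function.support_const_smul_subset c u)

lemma mem_FSm {X : Type*} {u : X → ℝ} : u ∈ FSm X ↔ (Function.support u).Finite := Iff.rfl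

lemma FSm_comp {X : Type*} {u : X → ℝ} (hu : u ∈ FSm X) (T : Equiv.Perm X) :
    (fun x => u (T x)) ∈ FSm X := by
  rw [mem_FSm] at *
  have : Function.support (fun x => u (T x)) = T ⁻¹' Function.support u := rfl
  rw [this]
  exact hu.preimage T.injective.injOn

lemma FSm_mul {X : Type*} {u : X → ℝ} (hu : u ∈ FSm X) (g : X → ℝ) :
    (fun x => g x * u x) ∈ FSm X := by
  rw [mem_FSm] at *
  refine hu.subset ?_
  intro x hx
  simp only [Function.mem_support] at *
  exact right_ne_zero_of_mul hx

lemma FSm_mul' {X : Type*} {u : X → ℝ} (hu : u ∈ FSm X) (g : X → ℝ) :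
    (fun x => u x * g x) ∈ FSm X := by
  simpa [mul_comm] using FSm_mul hu g

lemma FSm_sq {X : Type*} {u : X → ℝ} (hu : u ∈ FSm X) :
    (fun x => u x ^ 2) ∈ FSm X := by
  simpa [sq] using FSm_mul hu u

lemma FSm_summable {X : Type*} {u : X → ℝ} (hu : u ∈ FSm X) : Summable u :=
  summable_of_hasFiniteSupport hu

lemma FSm_delta {X : Type*} (y : X) : deltaFn y ∈ FSm X := by
  rw [mem_FSm]
  refine (Set.finite_singleton y).subset ?_
  intro x hx
  by_contra h
  simp only [Set.mem_singleton_iff] at h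
  simp [deltaFn, h] at hx

/-- inner product on finitely supported functions -/
def ipF (X : Type*) : FSm X →ₗ[ℝ] FSm X →ₗ[ℝ] ℝ :=
  LinearMap.mk₂ ℝ (fun u v => ∑' x, u.1 x * v.1 x)
    (by
      intro a b c
      rw [← Summable.tsum_add (FSm_summable (FSm_mul c.2 _)) (FSm_summable (FSm_mul c.2 _))]
      simp [add_mul])
    (by
      intro r a b
      simp [mul_assoc, tsum_mul_left])
    (by
      intro c a b
      rw [← Summable.tsum_add (FSm_summable (FSm_mul a.2 _)) (FSm_summable (FSm_mul b.2 _))]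
      simp [mul_add])
    (by
      intro r a b
      simp [mul_left_comm, tsum_mul_left])

lemma ipF_apply {X : Type*} (u v : FSm X) : ipF X u v = ∑' x, u.1 x * v.1 x := rfl

lemma ipF_nonneg {X : Type*} (u : FSm X) : 0 ≤ ipF X u u :=
  tsum_nonneg fun x => mul_self_nonneg _

lemma ipF_amgm {X : Type*} (u v : FSm X) (s : ℝ) (hs : 0 < s) :
    |ipF X u v| ≤ (ipF X u u / s + s * ipF X v v) / 2 := by
  have h : ∀ σ : ℝ, σ^2 = 1 → σ * ipF X u v ≤ (ipF X u u / s + s * ipF X v v) / 2 := by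
    intro σ hσ
    have := ipF_nonneg (u - (σ * s) • v)
    have hsym : ipF X v u = ipF X u v := by simp only [ipF_apply, mul_comm]
    simp only [map_sub, LinearMap.sub_apply, map_smul, LinearMap.smul_apply, smul_eq_mul, hsym] at this
    have h2 : 0 ≤ (ipF X u u - 2 * σ * s * ipF X u v + s^2 * ipF X v v) / s := by
      apply div_nonneg _ hs.le
      have e : ipF X u u - 2 * σ * s * ipF X u v + s^2 * ipF X v v = ipF X u u - 2 * σ * s * ipF X u v + σ^2 * s^2 * ipF X v v := by
        rw [hσ]; ring
      rw [e]
      linarith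
    have h3 : (ipF X u u - 2 * σ * s * ipF X u v + s^2 * ipF X v v) / s = ipF X u u / s - 2 * σ * ipF X u v + s * ipF X v v := by
      field_simp
    rw [h3] at h2
    linarith
  rw [abs_le]
  constructor
  · have := h (-1) (by norm_num); linarith
  · have := h 1 (by norm_num); linarith

/-- reversible jump systems -/
structure StepSys (X A : Type*) where
  T : A → Equiv.Perm X
  inv : A → A
  inv_inv : ∀ a, inv (inv a) = a
  T_inv : ∀ a x, T (inv a) (T a x) = x
  c : A → X → ℝ
  c_lo : ∀ a x, 1/2 ≤ c a x
  c_hi : ∀ a x, c a x ≤ 1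
  c_sym : ∀ a x, c (inv a) (T a x) = c a x

namespace StepSys
variable {X A : Type*} [Fintype A] (SS : StepSys X A)

/-- generator -/
def L : Module.End ℝ (X → ℝ) where
  toFun u x := ∑ a, SS.c a x * (u (SS.T a x) - u x)
  map_add' u v := by
    funext x
    simp only [Pi.add_apply, ← Finset.sum_add_distrib]
    exact Finset.sum_congr rfl fun a _ => by ring
  map_smul' r u := by
    funext x
    simp only [Pi.smul_apply, smul_eq_mul, RingHom.id_apply, Finset.mul_sum]
    exact Finset.sum_congr rfl fun a _ => by ring

lemma L_apply (u : X → ℝ) (x : X) : SS.L u x = ∑ a, SS.c a x * (u (SS.T a x) - u x) := rfl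

/-- total rate -/
def lam (_ : StepSys X A) : ℝ := 2 * (Fintype.card A : ℝ)

/-- lazy one step operator -/
def K : Module.End ℝ (X → ℝ) := 1 + (SS.lam)⁻¹ • SS.L

lemma K_apply (u : X → ℝ) (x : X) : SS.K u x = u x + (SS.lam)⁻¹ * SS.L u x := rfl

lemma L_mem (u : X → ℝ) (hu : u ∈ FSm X) : SS.L u ∈ FSm X := by
  have : SS.L u = ∑ a, (fun x => SS.c a x * (u (SS.T a x) - u x)) := by
    funext x; simp [L_apply]
  rw [this]
  exact Submodule.sum_mem _ fun a _ => FSm_mul (Submodule.sub_mem _ (FSm_comp hu _) hu) _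

lemma K_mem (u : X → ℝ) (hu : u ∈ FSm X) : SS.K u ∈ FSm X :=
  Submodule.add_mem _ hu (Submodule.smul_mem _ _ (SS.L_mem u hu))

/-- restriction of K to finitely supported functions -/
def KF : Module.End ℝ (FSm X) := SS.K.restrict SS.K_mem

lemma KF_coe (u : FSm X) : (SS.KF u).1 = SS.K u.1 := rfl

lemma KF_pow_coe (n : ℕ) (u : FSm X) : ((SS.KF ^ n) u).1 = (SS.K ^ n) u.1 := by
  induction n with
  | zero => rfl
  | succ n ih => rw [pow_succ', pow_succ', Module.End.mul_apply, Module.End.mul_apply, KF_coe, ih]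

/-- Dirichlet form with weights -/
def EE (u v : X → ℝ) : ℝ :=
  ∑ a, ∑' x, SS.c a x * ((u (SS.T a x) - u x) * (v (SS.T a x) - v x))

lemma reindex (G : A → X → ℝ) :
    ∑ a, ∑' x, G (SS.inv a) (SS.T a x) = ∑ a, ∑' x, G a x := by
  have h1 : ∀ a, ∑' x, G (SS.inv a) (SS.T a x) = ∑' x, G (SS.inv a) x := fun a =>
    (SS.T a).tsum_eq (fun x => G (SS.inv a) x)
  simp only [h1]
  exact Equiv.sum_comp (⟨SS.inv, SS.inv, SS.inv_inv, SS.inv_inv⟩ : A ≃ A) (fun a => ∑' x, G a x)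

lemma ip_L (u v : X → ℝ) (hu : u ∈ FSm X) (hv : v ∈ FSm X) :
    ∑' x, SS.L u x * v x = -(1/2) * SS.EE u v := by
  have hd : ∀ a, (fun x => u (SS.T a x) - u x) ∈ FSm X := fun a => Submodule.sub_mem _ (FSm_comp hu _) hu
  have e1 : ∑' x, SS.L u x * v x = ∑ a, ∑' x, SS.c a x * (u (SS.T a x) - u x) * v x := by
    simp only [L_apply, Finset.sum_mul]
    exact Summable.tsum_finsetSum fun a _ => FSm_summable (FSm_mul hv _)
  have e2 := SS.reindex (fun a x => SS.c a x * (u (SS.T a x) - u x) * v x)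
  simp only [SS.c_sym, SS.T_inv] at e2
  have e3 : SS.EE u v = ∑ a, ∑' x, SS.c a x * (u (SS.T a x) - u x) * v (SS.T a x)
      - ∑ a, ∑' x, SS.c a x * (u (SS.T a x) - u x) * v x := by
    rw [← Finset.sum_sub_distrib]
    refine Finset.sum_congr rfl fun a _ => ?_
    rw [← Summable.tsum_sub (FSm_summable (FSm_mul (FSm_comp hv _) _)) (FSm_summable (FSm_mul hv _))]
    exact tsum_congr fun x => by ring
  have e4 : ∑ a, ∑' x, SS.c a x * (u x - u (SS.T a x)) * v (SS.T a x) =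
     - ∑ a, ∑' x, SS.c a x * (u (SS.T a x) - u x) * v (SS.T a x) := by
    rw [← Finset.sum_neg_distrib]
    refine Finset.sum_congr rfl fun a _ => ?_
    rw [← tsum_neg]
    exact tsum_congr fun x => by ring
  rw [e1]
  linarith

lemma EE_symm (u v : X → ℝ) : SS.EE u v = SS.EE v u := by
  simp only [EE]
  exact Finset.sum_congr rfl fun a _ => tsum_congr fun x => by ring

lemma EE_nonneg (u : X → ℝ) : 0 ≤ SS.EE u u := by
  refine Finset.sum_nonneg fun a _ => tsum_nonneg fun x => ?_
  exact mul_nonneg (by linarith [SS.c_lo a x]) (mul_self_nonneg _)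

lemma EE_le (u : X → ℝ) (hu : u ∈ FSm X) :
    SS.EE u u ≤ 4 * Fintype.card A * ∑' x, u x * u x := by
  have : ∀ a, ∑' x, SS.c a x * ((u (SS.T a x) - u x) * (u (SS.T a x) - u x)) ≤ 4 * ∑' x, u x * u x := by
    intro a
    have hd : (fun x => u (SS.T a x) - u x) ∈ FSm X := Submodule.sub_mem _ (FSm_comp hu _) hu
    have h1 : ∑' x, u (SS.T a x) * u (SS.T a x) = ∑' x, u x * u x :=
      (SS.T a).tsum_eq (fun x => u x * u x)
    have h2 : 4 * ∑' x, u x * u x = ∑' x, (2 * (u (SS.T a x) * u (SS.T a x)) + 2 * (u x * u x)) := by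
      rw [Summable.tsum_add, tsum_mul_left, tsum_mul_left, h1]
      · ring
      · exact (FSm_summable (FSm_mul (FSm_comp hu _) _)).mul_left 2
      · exact (FSm_summable (FSm_mul hu _)).mul_left 2
    rw [h2]
    refine Summable.tsum_le_tsum (fun x => ?_) (FSm_summable (FSm_mul (FSm_mul hd _) _)) ?_
    · have := SS.c_hi a x
      have := SS.c_lo a x
      nlinarith [sq_nonneg (u (SS.T a x) - u x), sq_nonneg (u (SS.T a x) + u x),
        mul_nonneg (sub_nonneg.2 (SS.c_hi a x)) (mul_self_nonneg (u (SS.T a x) - u x))]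
    · exact ((FSm_summable (FSm_mul (FSm_comp hu _) _)).mul_left 2).add ((FSm_summable (FSm_mul hu _)).mul_left 2)
  calc SS.EE u u ≤ ∑ a : A, 4 * ∑' x, u x * u x := Finset.sum_le_sum fun a _ => this a
    _ = _ := by simp [Finset.sum_const]; ring

lemma ip_KF (u v : FSm X) : ipF X (SS.KF u) v = ipF X u v - (2 * SS.lam)⁻¹ * SS.EE u.1 v.1 := by
  rw [ipF_apply, KF_coe, ipF_apply]
  have : ∀ x, SS.K u.1 x * v.1 x = u.1 x * v.1 x + SS.lam⁻¹ * (SS.L u.1 x * v.1 x) := by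
    intro x; rw [K_apply]; ring
  simp only [this]
  rw [Summable.tsum_add (FSm_summable (FSm_mul v.2 _)) ((FSm_summable (FSm_mul v.2 _)).mul_left _),
    tsum_mul_left, ip_L _ _ _ u.2 v.2, mul_inv]
  ring

lemma lam_pos [Nonempty A] : 0 < SS.lam := by
  have : 0 < Fintype.card A := Fintype.card_pos
  simp only [lam]; positivity

lemma KF_symm (u v : FSm X) : ipF X (SS.KF u) v = ipF X u (SS.KF v) := by
  have hsym : ∀ u v : FSm X, ipF X v u = ipF X u v := by intro u v; simp only [ipF_apply, mul_comm]
  rw [hsym (SS.KF v) u, ip_KF, ip_KF, hsym u v, SS.EE_symm]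

lemma KF_nonneg [Nonempty A] (u : FSm X) : 0 ≤ ipF X (SS.KF u) u := by
  rw [ip_KF]
  have h := SS.EE_le u.1 u.2
  rw [← ipF_apply u u] at h
  have hl := SS.lam_pos
  have : (2 * SS.lam)⁻¹ * SS.EE u.1 u.1 ≤ (2 * SS.lam)⁻¹ * (2 * SS.lam * ipF X u u) := by
    apply mul_le_mul_of_nonneg_left _ (by positivity)
    simp only [lam]; linarith
  rw [inv_mul_cancel_left₀ (by positivity)] at this
  linarith

lemma KF_le [Nonempty A] (u : FSm X) : ipF X (SS.KF u) u ≤ ipF X u u := by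
  rw [ip_KF]
  have := mul_nonneg (inv_nonneg.2 (mul_nonneg zero_le_two SS.lam_pos.le)) (SS.EE_nonneg u.1)
  linarith

/-- squared l2 distance by a permutation -/
def Disp (n : ℕ) (g : Equiv.Perm X) : Prop :=
  ∀ u ∈ FSm X, ∑' x, (u (g x) - u x)^2 ≤ (n:ℝ)^2 * (2 * SS.EE u u)

lemma Disp_one : SS.Disp 0 1 := by
  intro u hu; simp

lemma Disp_gen (a : A) (u : X → ℝ) (hu : u ∈ FSm X) :
    ∑' x, (u (SS.T a x) - u x)^2 ≤ 2 * SS.EE u u := by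
  have hd : ∀ a, (fun x => u (SS.T a x) - u x) ∈ FSm X := fun a => Submodule.sub_mem _ (FSm_comp hu _) hu
  have h1 : ∑' x, SS.c a x * ((u (SS.T a x) - u x) * (u (SS.T a x) - u x)) ≤ SS.EE u u := by
    refine Finset.single_le_sum (f := fun a => ∑' x, SS.c a x * ((u (SS.T a x) - u x) * (u (SS.T a x) - u x))) (fun b _ => tsum_nonneg fun x => ?_) (Finset.mem_univ a)
    exact mul_nonneg (by linarith [SS.c_lo b x]) (mul_self_nonneg _)
  refine le_trans ?_ (mul_le_mul_of_nonneg_left h1 zero_le_two)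
  rw [← tsum_mul_left]
  refine Summable.tsum_le_tsum (fun x => ?_) (FSm_summable (FSm_sq (hd a))) ((FSm_summable (FSm_mul (FSm_mul (hd a) _) _)).mul_left 2)
  nlinarith [mul_nonneg (sub_nonneg.2 (SS.c_lo a x)) (mul_self_nonneg (u (SS.T a x) - u x))]

lemma Disp_mul (n : ℕ) (g : Equiv.Perm X) (hg : SS.Disp n g) (a : A) : SS.Disp (n+1) (SS.T a * g) := by
  intro u hu
  rcases Nat.eq_zero_or_pos n with rfl | hn
  · -- n = 0
    have h0 := hg u hu
    have hd : (fun x => u (g x) - u x) ∈ FSm X := Submodule.sub_mem _ (FSm_comp hu _) hu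
    have hz : ∀ x, u (g x) = u x := by
      intro x
      have h1 : (u (g x) - u x)^2 ≤ 0 := by
        refine le_trans ((FSm_summable (FSm_sq hd)).le_tsum x (fun y _ => sq_nonneg _)) ?_
        simpa using h0
      nlinarith [sq_nonneg (u (g x) - u x)]
    have h1 := SS.Disp_gen a u hu
    have h2 : ∑' x, (u ((SS.T a * g) x) - u x)^2 = ∑' x, (u (SS.T a x) - u x)^2 := by
      rw [← g.tsum_eq (fun x => (u (SS.T a x) - u x)^2)]
      exact tsum_congr fun x => by rw [hz]; rfl
    rw [h2]; simpa using h1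
  · have hn' : (0:ℝ) < n := by exact_mod_cast hn
    have h0 := hg u hu
    have h1 := SS.Disp_gen a u hu
    have hd : (fun x => u (g x) - u x) ∈ FSm X := Submodule.sub_mem _ (FSm_comp hu _) hu
    have hda : (fun x => u (SS.T a x) - u x) ∈ FSm X := Submodule.sub_mem _ (FSm_comp hu _) hu
    have hdg := FSm_comp hda g
    have hdag : (fun x => u ((SS.T a * g) x) - u x) ∈ FSm X := Submodule.sub_mem _ (FSm_comp hu _) hu
    rw [← g.tsum_eq (fun x => (u (SS.T a x) - u x)^2)] at h1
    have h2 : ∑' x, (u ((SS.T a * g) x) - u x)^2 ≤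
        ∑' x, (((n:ℝ)+1)/n * (u (g x) - u x)^2 + ((n:ℝ)+1) * (u (SS.T a (g x)) - u (g x))^2) := by
      refine Summable.tsum_le_tsum (fun x => ?_) (FSm_summable (FSm_sq hdag)) (((FSm_summable (FSm_sq hd)).mul_left _).add ((FSm_summable (FSm_sq hdg)).mul_left _))
      show (u (SS.T a (g x)) - u x)^2 ≤ _
      set p := u (g x) - u x
      set q := u (SS.T a (g x)) - u (g x)
      have : u (SS.T a (g x)) - u x = p + q := by simp only [p, q]; ring
      rw [this]
      have h3 : ((n:ℝ)+1)/n * p^2 + ((n:ℝ)+1) * q^2 - (p+q)^2 = (p - n * q)^2 / n := by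
        field_simp; ring
      have : 0 ≤ (p - n * q)^2 / n := by positivity
      linarith
    rw [Summable.tsum_add ((FSm_summable (FSm_sq hd)).mul_left _) ((FSm_summable (FSm_sq hdg)).mul_left _), tsum_mul_left, tsum_mul_left] at h2
    refine h2.trans ?_
    have h4 : ((n:ℝ)+1)/n * ∑' x, (u (g x) - u x)^2 ≤ ((n:ℝ)+1)/n * ((n:ℝ)^2 * (2 * SS.EE u u)) :=
      mul_le_mul_of_nonneg_left h0 (by positivity)
    have h5 := mul_le_mul_of_nonneg_left h1 (by positivity : (0:ℝ) ≤ (n:ℝ)+1)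
    refine (add_le_add h4 h5).trans (le_of_eq ?_)
    push_cast; field_simp

lemma Disp_pow_mul (n : ℕ) (g : Equiv.Perm X) (hg : SS.Disp n g) (a : A) (r : ℕ) :
    SS.Disp (n+r) (SS.T a ^ r * g) := by
  induction r with
  | zero => simpa using hg
  | succ r ih =>
    rw [pow_succ', mul_assoc]
    exact SS.Disp_mul _ _ ih a

lemma Disp_mono (n m : ℕ) (h : n ≤ m) (g : Equiv.Perm X) (hg : SS.Disp n g) : SS.Disp m g := by
  intro u hu
  refine (hg u hu).trans ?_
  have : (n:ℝ) ≤ m := by exact_mod_cast h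
  have := SS.EE_nonneg u
  gcongr

end StepSys

lemma nash_rec (m : ℕ) (b C0 : ℝ) (hb : 0 ≤ b) (hC0 : 0 ≤ C0) :
    ∃ C : ℝ, 0 < C ∧ ∀ φ : ℕ → ℝ, (∀ n, φ (n+1) ≤ φ n) → (∀ n, 0 ≤ φ n) → φ 0 ≤ 1 →
      (∀ n R : ℕ, 1 ≤ R → φ (2*n) ≤ b * (R:ℝ)^2 / ((n:ℝ)+1) * φ n + C0 / (R:ℝ)^m) →
      ∀ n : ℕ, φ n * (√((n:ℝ)+1))^m ≤ C := by
  -- choose ε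
  set ε : ℝ := 1 / (√(2 * (b+1) * (√2)^m)) with hε
  have hε0 : 0 < ε := by positivity
  have hε2 : b * ε^2 * (√2)^m ≤ 1/2 := by
    have : ε^2 = 1 / (2 * (b+1) * (√2)^m) := by
      rw [hε, div_pow, Real.sq_sqrt (by positivity)]; norm_num
    rw [this]
    have h2 : (0:ℝ) < (√2)^m := by positivity
    rw [mul_one_div, div_mul_eq_mul_div, div_le_iff₀ (by positivity)]
    nlinarith
  set C : ℝ := 2 * C0 * (2/ε)^m * (√2)^m + (√2 / ε)^m + 1 with hC
  have hCpos : 0 < C := by positivity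
  refine ⟨C, hCpos, ?_⟩
  intro φ hanti hpos h01 hrec n
  have hant : Antitone φ := antitone_nat_of_succ_le hanti
  induction n using Nat.strong_induction_on with
  | _ n ih =>
    obtain ⟨h, hh⟩ : ∃ h, h = n / 2 := ⟨_, rfl⟩
    have h1 : 2 * h ≤ n := by omega
    have h2 : n + 1 ≤ 2 * (h+1) := by omega
    have hs2 : (√((n:ℝ)+1)) ≤ √2 * √((h:ℝ)+1) := by
      rw [← Real.sqrt_mul (by norm_num)]
      apply Real.sqrt_le_sqrt
      exact_mod_cast h2
    by_cases hsmall : ε * √((h:ℝ)+1) < 1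
    · have h3 : √((h:ℝ)+1) ≤ 1/ε := by
        rw [le_div_iff₀ hε0]; linarith
      have h4 : √((n:ℝ)+1) ≤ √2 / ε := by
        calc _ ≤ √2 * √((h:ℝ)+1) := hs2
          _ ≤ √2 * (1/ε) := by gcongr
          _ = _ := by ring
      have h5 : φ n ≤ 1 := (hant (Nat.zero_le n)).trans h01
      calc φ n * (√((n:ℝ)+1))^m ≤ 1 * (√2 / ε)^m := by
            gcongr
        _ ≤ C := by
            have : 0 ≤ 2 * C0 * (2/ε)^m * (√2)^m := by positivity
            rw [hC]; linarith
    · push Not at hsmall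
      have hn : h < n := by
        rcases Nat.eq_zero_or_pos n with hn | hn
        · exfalso
          have : h = 0 := by omega
          rw [this] at hsmall
          simp at hsmall
          have : ε < 1 := by
            rw [hε, div_lt_one (by positivity)]
            rw [Real.lt_sqrt (by norm_num)]
            have : (1:ℝ) ≤ (√2)^m := one_le_pow₀ (by rw [Real.one_le_sqrt]; norm_num)
            nlinarith
          linarith
        · omega
      set q := √((h:ℝ)+1) with hq
      have hq0 : 0 < q := by positivity
      have hq2 : q^2 = (h:ℝ)+1 := Real.sq_sqrt (by positivity)
      set R := ⌊ε * q⌋₊ with hR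
      have hR1 : 1 ≤ R := Nat.one_le_floor_iff _ |>.2 hsmall
      have hR1' : (1:ℝ) ≤ R := by exact_mod_cast hR1
      have hRle : (R:ℝ) ≤ ε * q := Nat.floor_le (by positivity)
      have hRge : ε * q / 2 ≤ R := by
        have := Nat.lt_floor_add_one (ε * q)
        linarith
      have hr := hrec h R hR1
      have hmain : φ n ≤ b * ε^2 * φ h + C0 * (2/ε)^m / q^m := by
        refine (hant h1).trans (hr.trans (add_le_add ?_ ?_))
        · apply mul_le_mul_of_nonneg_right _ (hpos h)
          rw [div_le_iff₀ (by positivity), ← hq2]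
          calc b * (R:ℝ)^2 ≤ b * (ε * q)^2 := by gcongr
            _ = _ := by ring
        · have h7 : 1/(R:ℝ) ≤ 2/ε/q := by
            rw [div_div, div_le_div_iff₀ (by positivity) (by positivity)]; linarith
          calc C0/(R:ℝ)^m = C0*(1/(R:ℝ))^m := by rw [one_div_pow]; ring
            _ ≤ C0*(2/ε/q)^m := mul_le_mul_of_nonneg_left (pow_le_pow_left₀ (by positivity) h7 m) hC0
            _ = C0*(2/ε)^m/q^m := by rw [div_pow (2/ε) q]; ring
      have ih' := ih h hn
      calc φ n * (√((n:ℝ)+1))^m ≤ (b * ε^2 * φ h + C0 * (2/ε)^m / q^m) * (√2 * q)^m := by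
            have : 0 ≤ b * ε^2 * φ h + C0 * (2/ε)^m / q^m := by
              have := hpos h; positivity
            gcongr
        _ = (b * ε^2 * (√2)^m) * (φ h * q^m) + C0 * (2/ε)^m * (√2)^m := by
            rw [mul_pow]; field_simp
        _ ≤ 1/2 * C + C0 * (2/ε)^m * (√2)^m := by
            have : 0 ≤ φ h * q^m := by have := hpos h; positivity
            gcongr
        _ ≤ C := by
            have : 0 ≤ (√2 / ε)^m := by positivity
            rw [hC]; linarith

namespace StepSys
variable {X A : Type*} [Fintype A] (SS : StepSys X A)

lemma sum_L (u : X → ℝ) (hu : u ∈ FSm X) : ∑' x, SS.L u x = 0 := by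
  have hd : ∀ a, (fun x => u (SS.T a x) - u x) ∈ FSm X := fun a => Submodule.sub_mem _ (FSm_comp hu _) hu
  have e1 : ∑' x, SS.L u x = ∑ a, ∑' x, SS.c a x * (u (SS.T a x) - u x) := by
    simp only [L_apply]
    exact Summable.tsum_finsetSum fun a _ => FSm_summable (FSm_mul (hd a) _)
  have e2 := SS.reindex (fun a x => SS.c a x * (u (SS.T a x) - u x))
  simp only [SS.c_sym, SS.T_inv] at e2
  have e4 : ∑ a, ∑' x, SS.c a x * (u x - u (SS.T a x)) =
     - ∑ a, ∑' x, SS.c a x * (u (SS.T a x) - u x) := by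
    rw [← Finset.sum_neg_distrib]
    refine Finset.sum_congr rfl fun a _ => ?_
    rw [← tsum_neg]
    exact tsum_congr fun x => by ring
  rw [e1]; linarith

lemma sum_K (u : X → ℝ) (hu : u ∈ FSm X) : ∑' x, SS.K u x = ∑' x, u x := by
  simp only [K_apply]
  rw [Summable.tsum_add (FSm_summable hu) ((FSm_summable (SS.L_mem u hu)).mul_left _), tsum_mul_left,
    sum_L _ _ hu]
  simp

lemma K_nonneg [Nonempty A] (u : X → ℝ) (hu : ∀ x, 0 ≤ u x) (x : X) : 0 ≤ SS.K u x := by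
  rw [K_apply, L_apply]
  have h1 : ∑ a, SS.c a x * (u (SS.T a x) - u x) ≥ ∑ a : A, (- u x) := by
    refine Finset.sum_le_sum fun a _ => ?_
    have := SS.c_lo a x
    have := SS.c_hi a x
    nlinarith [hu x, hu (SS.T a x), mul_nonneg (by linarith : 0 ≤ SS.c a x) (hu (SS.T a x)), mul_nonneg (sub_nonneg.2 (SS.c_hi a x)) (hu x)]
  simp only [Finset.sum_neg_distrib, Finset.sum_const, Finset.card_univ, nsmul_eq_mul] at h1
  have hl := SS.lam_pos
  have h2 := mul_le_mul_of_nonneg_left h1 (inv_nonneg.2 hl.le)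
  have h3 : SS.lam⁻¹ * -((Fintype.card A : ℝ) * u x) = - (1/2 * u x) := by
    have : (Fintype.card A : ℝ) = SS.lam / 2 := by simp [lam]
    rw [this]; field_simp
  rw [h3] at h2
  have := hu x
  linarith

lemma Kpow_nonneg [Nonempty A] (y : X) (n : ℕ) (x : X) : 0 ≤ (SS.K ^ n) (deltaFn y) x := by
  induction n generalizing x with
  | zero => simp [deltaFn]; split_ifs <;> norm_num
  | succ n ih => rw [pow_succ']; exact SS.K_nonneg _ ih x

lemma Kpow_mem (y : X) (n : ℕ) : (SS.K ^ n) (deltaFn y) ∈ FSm X := by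
  induction n with
  | zero => exact FSm_delta y
  | succ n ih => rw [pow_succ']; exact SS.K_mem _ ih

lemma Kpow_sum (y : X) (n : ℕ) : ∑' x, (SS.K ^ n) (deltaFn y) x = 1 := by
  induction n with
  | zero => simp [deltaFn]
  | succ n ih =>
    rw [pow_succ', ← ih]; exact SS.sum_K _ (SS.Kpow_mem y n)

/-- the bounded multiplicity hypothesis -/
def NashHyp (ι : Type*) [Fintype ι] (C0 : ℝ) : Prop :=
  ∀ R : ℕ, 1 ≤ R → ∃ g : (ι → Fin R) → Equiv.Perm X, (∀ r, SS.Disp (Fintype.card ι * R) (g r)) ∧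
    ∀ x y, ((Finset.univ.filter fun r => g r x = y).card : ℝ) ≤ C0

lemma nash_ineq {ι : Type*} [Fintype ι] {C0 : ℝ} (h : SS.NashHyp ι C0)
    (u : X → ℝ) (hu : u ∈ FSm X) (hu0 : ∀ x, 0 ≤ u x) (hu1 : ∑' x, u x = 1) (R : ℕ) (hR : 1 ≤ R) :
    ∑' x, u x * u x ≤ (Fintype.card ι * R : ℝ)^2 * SS.EE u u + C0 / (R:ℝ)^(Fintype.card ι) := by
  obtain ⟨g, hg, hc⟩ := h R hR
  have hR' : (0:ℝ) < R := by exact_mod_cast hR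
  set N : ℝ := (R:ℝ)^(Fintype.card ι) with hN
  have hN0 : 0 < N := by positivity
  have hsu := FSm_summable hu
  have hC0 : 0 ≤ C0 := by
    by_cases hX : Nonempty X
    · obtain ⟨x⟩ := hX
      exact (Nat.cast_nonneg _).trans (hc x x)
    · exfalso
      have := not_nonempty_iff.1 hX
      simp at hu1
  -- per r identity
  have h1 : ∀ r, ∑' x, u x * u x = 1/2 * ∑' x, (u (g r x) - u x)^2 + ∑' x, u x * u (g r x) := by
    intro r
    have e1 : ∑' x, u (g r x) * u (g r x) = ∑' x, u x * u x := (g r).tsum_eq (fun x => u x * u x)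
    have hgr := FSm_comp hu (g r)
    have e2 : ∑' x, (u (g r x) - u x)^2 = ∑' x, u (g r x) * u (g r x) - 2 * ∑' x, u x * u (g r x) + ∑' x, u x * u x := by
      rw [← tsum_mul_left, ← Summable.tsum_sub, ← Summable.tsum_add]
      · exact tsum_congr fun x => by ring
      · exact (FSm_summable (FSm_mul hgr _)).sub ((FSm_summable (FSm_mul hgr _)).mul_left _)
      · exact FSm_summable (FSm_mul hu _)
      · exact FSm_summable (FSm_mul hgr _)
      · exact (FSm_summable (FSm_mul hgr _)).mul_left _
    rw [e2, e1]; ring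
  have h2 : ∀ x, ∑ r, u (g r x) ≤ C0 := by
    intro x
    rw [Finset.sum_comp u (fun r => g r x)]
    calc _ ≤ ∑ b ∈ Finset.univ.image (fun r => g r x), C0 * u b := by
          refine Finset.sum_le_sum fun b _ => ?_
          rw [nsmul_eq_mul]
          refine mul_le_mul_of_nonneg_right ?_ (hu0 b)
          convert hc x b
      _ = C0 * ∑ b ∈ Finset.univ.image (fun r => g r x), u b := by rw [Finset.mul_sum]
      _ ≤ C0 * 1 := by
          refine mul_le_mul_of_nonneg_left ?_ hC0
          rw [← hu1]
          exact hsu.sum_le_tsum _ (fun x _ => hu0 x)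
      _ = C0 := mul_one _
  have h3 : ∑ r, ∑' x, u x * u (g r x) ≤ C0 := by
    rw [← Summable.tsum_finsetSum (fun r _ => FSm_summable (FSm_mul' hu _))]
    calc _ ≤ ∑' x, u x * C0 := by
          refine Summable.tsum_le_tsum (fun x => ?_) ?_ (hsu.mul_right _)
          · rw [← Finset.mul_sum]
            exact mul_le_mul_of_nonneg_left (h2 x) (hu0 x)
          · exact summable_sum fun r _ => FSm_summable (FSm_mul' hu _)
      _ = C0 := by rw [tsum_mul_right, hu1, one_mul]
  have hcard : (Fintype.card (ι → Fin R) : ℝ) = N := by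
    simp [hN]
  have h4 : N * ∑' x, u x * u x ≤ N * ((Fintype.card ι * R : ℝ)^2 * SS.EE u u) + C0 := by
    calc N * ∑' x, u x * u x = ∑ r : ι → Fin R, ∑' x, u x * u x := by
          rw [Finset.sum_const, Finset.card_univ, nsmul_eq_mul, hcard]
      _ = ∑ r : ι → Fin R, (1/2 * ∑' x, (u (g r x) - u x)^2 + ∑' x, u x * u (g r x)) :=
          Finset.sum_congr rfl fun r _ => h1 r
      _ = ∑ r : ι → Fin R, 1/2 * ∑' x, (u (g r x) - u x)^2 + ∑ r, ∑' x, u x * u (g r x) :=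
          Finset.sum_add_distrib
      _ ≤ ∑ r : ι → Fin R, (Fintype.card ι * R : ℝ)^2 * SS.EE u u + C0 := by
          refine add_le_add (Finset.sum_le_sum fun r _ => ?_) h3
          have := hg r u hu
          push_cast at this
          linarith
      _ = _ := by
          rw [Finset.sum_const, Finset.card_univ, nsmul_eq_mul, hcard]
  have h5 := div_le_div_of_nonneg_right h4 hN0.le
  rw [mul_div_cancel_left₀ _ hN0.ne', add_div, mul_div_cancel_left₀ _ hN0.ne'] at h5
  exact h5

/-- delta as an element of the space -/
def dl (y : X) : FSm X := ⟨deltaFn y, FSm_delta y⟩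

lemma ip_dl (x : X) (u : FSm X) : ipF X (dl x) u = u.1 x := by
  rw [ipF_apply, tsum_eq_single x]
  · simp [dl, deltaFn]
  · intro b hb; simp [dl, deltaFn, hb]

theorem kernel_bounds [Nonempty A] {ι : Type*} [Fintype ι] {C0 : ℝ} (hC0 : 0 ≤ C0) (h : SS.NashHyp ι C0) :
    ∃ C : ℝ, 0 < C ∧ ∀ (n : ℕ) (x y : X),
      |(SS.K ^ n) (deltaFn y) x| ≤ C / (√((n:ℝ)+1))^(Fintype.card ι) ∧
      |SS.L ((SS.K ^ n) (deltaFn y)) x| ≤ C / (((n:ℝ)+1) * (√((n:ℝ)+1))^(Fintype.card ι)) := by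
  set m := Fintype.card ι with hm
  have hl := SS.lam_pos
  obtain ⟨C, hC, hrec⟩ := nash_rec m ((m:ℝ)^2 * (2 * SS.lam)) C0 (by positivity) hC0
  set φ : X → ℕ → ℝ := fun y n => ipF X ((SS.KF ^ n) (dl y)) ((SS.KF ^ n) (dl y)) with hφ
  have sm := spec_main (ipF X) SS.KF ipF_nonneg SS.KF_symm SS.KF_nonneg SS.KF_le
  have hsp := spec_pow (ipF X) SS.KF SS.KF_symm
  have hb : ∀ y n, φ y n * (√((n:ℝ)+1))^m ≤ C := by
    intro y
    refine hrec (φ y) (fun n => (sm (dl y) n).2.2) (fun n => ipF_nonneg _) ?_ ?_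
    · simp [hφ, ip_dl]; simp [dl, deltaFn]
    · intro n R hR
      have e : (SS.KF ^ (2*n)) (dl y) = (SS.KF ^ n) ((SS.KF ^ n) (dl y)) := by
        rw [two_mul, pow_add]; rfl
      have h1 := (sm ((SS.KF ^ n) (dl y)) n).1
      rw [← e, SS.ip_KF] at h1
      have h2 := SS.nash_ineq h ((SS.K ^ (2*n)) (deltaFn y)) (SS.Kpow_mem y _) (SS.Kpow_nonneg y _) (SS.Kpow_sum y _) R hR
      have e2 : ((SS.KF ^ (2*n)) (dl y)).1 = (SS.K ^ (2*n)) (deltaFn y) := SS.KF_pow_coe _ _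
      have e3 : φ y (2*n) = ∑' x, (SS.K ^ (2*n)) (deltaFn y) x * (SS.K ^ (2*n)) (deltaFn y) x := by
        simp only [hφ, ipF_apply, e2]
      rw [e2] at h1
      rw [e3]
      refine h2.trans (add_le_add ?_ le_rfl)
      set E := SS.EE ((SS.K ^ (2*n)) (deltaFn y)) ((SS.K ^ (2*n)) (deltaFn y)) with hE
      have hE0 : 0 ≤ E := SS.EE_nonneg _
      have h3 : ((n:ℝ)+1) * E ≤ 2 * SS.lam * φ y n := by
        have h4 : (2*(n:ℝ)+1) * ((2 * SS.lam)⁻¹ * E) ≤ φ y n := by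
          have : ∀ p : ℝ, p - (p - (2 * SS.lam)⁻¹ * E) = (2 * SS.lam)⁻¹ * E := by intro p; ring
          rw [this] at h1; exact h1
        have h5 : (2*(n:ℝ)+1) * ((2 * SS.lam)⁻¹ * E) = (2*(n:ℝ)+1) * E / (2 * SS.lam) := by field_simp
        rw [h5, div_le_iff₀ (by positivity)] at h4
        have : 0 ≤ (n:ℝ) * E := by positivity
        linarith
      rw [div_mul_eq_mul_div, le_div_iff₀ (by positivity)]
      calc _ = ((m:ℝ) * R)^2 * (((n:ℝ)+1) * E) := by ring
        _ ≤ ((m:ℝ) * R)^2 * (2 * SS.lam * φ y n) := by gcongr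
        _ = _ := by ring
  have hφle : ∀ y n, φ y n ≤ C / (√((n:ℝ)+1))^m := by
    intro y n
    rw [le_div_iff₀ (by positivity)]; exact hb y n
  have hφle' : ∀ y (n j i : ℕ), n + 1 ≤ 3 * (i + 1) → i ≤ j → φ y j ≤ C * (√3)^m / (√((n:ℝ)+1))^m := by
    intro y n j i hi hij
    refine (hφle y j).trans ?_
    rw [div_le_div_iff₀ (by positivity) (by positivity), mul_assoc, ← mul_pow, ← Real.sqrt_mul (by norm_num)]
    have h1 : n + 1 ≤ 3 * (j+1) := by omega
    have h2 : (n:ℝ) + 1 ≤ 3 * ((j:ℝ)+1) := by exact_mod_cast h1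
    gcongr
  have hone : 1 ≤ (√3:ℝ)^m := one_le_pow₀ (by rw [Real.one_le_sqrt]; norm_num)
  refine ⟨C * (√3)^m * (3 * SS.lam + 1), by positivity, ?_⟩
  intro n x y
  have hQ : 0 ≤ C * (√3)^m / (√((n:ℝ)+1))^m := by positivity
  set Q := C * (√3)^m / (√((n:ℝ)+1))^m with hQdef
  constructor
  · have e : (SS.K ^ n) (deltaFn y) x = ipF X ((SS.KF^(n/2)) (dl x)) ((SS.KF^(n - n/2)) (dl y)) := by
      rw [hsp, ip_dl, ← Module.End.mul_apply, ← pow_add, SS.KF_pow_coe]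
      have h9 : n/2 + (n - n/2) = n := by omega
      rw [h9]; rfl
    rw [e]
    refine (ipF_amgm _ _ 1 one_pos).trans ?_
    have h1 := hφle' x n (n/2) (n/3) (by omega) (by omega)
    have h2 := hφle' y n (n-n/2) (n/3) (by omega) (by omega)
    simp only [hφ] at h1 h2
    rw [div_one, one_mul]
    have : Q ≤ C * (√3)^m * (3 * SS.lam + 1) / (√((n:ℝ)+1))^m := by
      rw [hQdef]
      apply div_le_div_of_nonneg_right _ (by positivity)
      have : 0 < C * (√3)^m := by positivity
      nlinarith [mul_pos this hl]
    linarith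
  · obtain ⟨j, hj⟩ : ∃ j, j = n / 3 := ⟨_, rfl⟩
    set f := (SS.KF^(n - 2*j)) (dl y) with hf
    have h0 := (sm f j).2.1
    set v := (SS.KF ^ j) f - SS.KF ((SS.KF ^ j) f) with hv
    have e : SS.L ((SS.K ^ n) (deltaFn y)) x = - SS.lam * ipF X ((SS.KF^j) (dl x)) v := by
      have e1 : ipF X ((SS.KF^j) (dl x)) v = ((SS.KF^n) (dl y)).1 x - (SS.KF ((SS.KF^n) (dl y))).1 x := by
        have hcomm : (SS.KF^j) v = (SS.KF^n) (dl y) - SS.KF ((SS.KF^n) (dl y)) := by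
          rw [hv, map_sub, hf]
          simp only [← Module.End.mul_apply, ← pow_succ', ← pow_add]
          congr 3 <;> omega
        rw [hsp, ip_dl, hcomm]; rfl
      rw [e1, SS.KF_coe, SS.KF_pow_coe, SS.K_apply]
      show SS.L ((SS.K ^ n) (deltaFn y)) x = - SS.lam * ((SS.K ^ n) (deltaFn y) x - ((SS.K ^ n) (deltaFn y) x + SS.lam⁻¹ * SS.L ((SS.K ^ n) (deltaFn y)) x))
      field_simp; ring
    have h1 := hφle' x n j j (by omega) le_rfl
    have h2 := hφle' y n (n-2*j) j (by omega) (by omega)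
    simp only [hφ] at h1 h2
    rw [← hf] at h2
    have h3 := ipF_amgm ((SS.KF^j) (dl x)) v ((j:ℝ)+1) (by positivity)
    have h4 : ((j:ℝ)+1) * ipF X v v ≤ Q / ((j:ℝ)+1) := by
      rw [le_div_iff₀ (by positivity)]
      calc _ = ((j:ℝ)+1)^2 * ipF X v v := by ring
        _ ≤ Q := h0.trans h2
    have h5 : ipF X ((SS.KF^j) (dl x)) ((SS.KF^j) (dl x)) / ((j:ℝ)+1) ≤ Q / ((j:ℝ)+1) :=
      div_le_div_of_nonneg_right h1 (by positivity)
    have h6 : Q / ((j:ℝ)+1) ≤ 3 * Q / ((n:ℝ)+1) := by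
      rw [div_le_div_iff₀ (by positivity) (by positivity)]
      have : n + 1 ≤ 3 * (j+1) := by omega
      have : (n:ℝ) + 1 ≤ 3 * ((j:ℝ)+1) := by exact_mod_cast this
      nlinarith
    rw [e, abs_mul, abs_neg, abs_of_pos hl]
    calc SS.lam * |ipF X ((SS.KF^j) (dl x)) v| ≤ SS.lam * (3 * Q / ((n:ℝ)+1)) := by
          apply mul_le_mul_of_nonneg_left _ hl.le
          linarith
      _ ≤ (3 * SS.lam + 1) * Q / ((n:ℝ)+1) := by
          rw [← mul_div_assoc]
          apply div_le_div_of_nonneg_right _ (by positivity)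
          linarith
      _ = _ := by rw [hQdef]; field_simp

end StepSys

/-- directions -/
abbrev Dir (d : ℕ) := Fin d × Bool

/-- unit vector of a direction -/
def dv {d : ℕ} (p : Dir d) : Fin d → ℤ := Pi.single p.1 (if p.2 then 1 else -1)

/-- opposite direction -/
def dneg {d : ℕ} (p : Dir d) : Dir d := (p.1, !p.2)

lemma dneg_dneg {d : ℕ} (p : Dir d) : dneg (dneg p) = p := by simp [dneg]

lemma dv_dneg {d : ℕ} (p : Dir d) : dv (dneg p) = - dv p := by
  obtain ⟨a, s⟩ := p
  funext b
  cases s <;> by_cases h : b = a <;> simp [dv, dneg, Pi.single_apply, h]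

lemma dv_ne_zero {d : ℕ} (p : Dir d) : dv p ≠ 0 := by
  obtain ⟨a, s⟩ := p
  intro h
  have := congrFun h a
  cases s <;> simp [dv] at this

lemma dv_inj {d : ℕ} {p q : Dir d} (h : dv p = dv q) : p = q := by
  obtain ⟨a, s⟩ := p
  obtain ⟨b, s'⟩ := q
  have h1 := congrFun h a
  have hab : a = b := by
    by_contra hab
    cases s <;> simp [dv, Pi.single_apply, hab] at h1
  subst hab
  cases s <;> cases s' <;> simp [dv] at h1 ⊢

/-- single particle configuration shift -/
def E {d k : ℕ} (l : Fin k) (v : Fin d → ℤ) : Conf d k := Pi.single l v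

lemma E_same {d k : ℕ} (l : Fin k) (v : Fin d → ℤ) : E l v l = v := by simp [E]
lemma E_ne {d k : ℕ} {l j : Fin k} (h : j ≠ l) (v : Fin d → ℤ) : E l v j = 0 := by simp [E, h]
lemma E_apply {d k : ℕ} (l j : Fin k) (v : Fin d → ℤ) : E l v j = if j = l then v else 0 := by
  simp [E, Pi.single_apply]

/-- hop / swap map -/
def hop {d k : ℕ} (l : Fin k) (v : Fin d → ℤ) (x : Conf d k) : Conf d k :=
  fun j => Equiv.swap (x l) (x l + v) (x j)

lemma hop_mem {d k : ℕ} (l : Fin k) (v : Fin d → ℤ) {x : Conf d k} (hx : x ∈ SSet d k) :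
    hop l v x ∈ SSet d k := by
  intro i j hij h
  exact hx i j hij ((Equiv.swap (x l) (x l + v)).injective h)

lemma hop_self {d k : ℕ} (l : Fin k) (v : Fin d → ℤ) (x : Conf d k) : hop l v x l = x l + v := by
  simp [hop]

lemma hop_hop {d k : ℕ} (l : Fin k) (v : Fin d → ℤ) (x : Conf d k) : hop l (-v) (hop l v x) = x := by
  funext j
  have h : hop l v x l + -v = x l := by rw [hop_self]; abel
  show Equiv.swap (hop l v x l) (hop l v x l + -v) (hop l v x j) = x j
  rw [h, hop_self, Equiv.swap_comm]
  exact Equiv.swap_apply_self _ _ _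

lemma hop_unocc {d k : ℕ} (l : Fin k) (v : Fin d → ℤ) {x : Conf d k} (hx : x ∈ SSet d k)
    (h : ¬ ∃ l', x l + v = x l') : hop l v x = x + E l v := by
  push Not at h
  funext j
  by_cases hj : j = l
  · subst hj; rw [hop_self]; simp [E_same]
  · simp only [Pi.add_apply, E_ne hj, add_zero]
    exact Equiv.swap_apply_of_ne_of_ne (hx j l hj) (fun e => h j e.symm)

lemma hop_occ {d k : ℕ} (l l' : Fin k) (v : Fin d → ℤ) {x : Conf d k} (hx : x ∈ SSet d k) (hv : v ≠ 0)
    (h : x l + v = x l') : hop l v x = x + E l v - E l' v := by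
  have hne : l ≠ l' := by rintro rfl; exact hv (by simpa using h)
  funext j
  by_cases hj : j = l
  · subst hj; rw [hop_self]; simp [E_same, E_ne hne]
  · by_cases hj' : j = l'
    · subst hj'
      simp only [hop, ← h, Equiv.swap_apply_right, Pi.sub_apply, Pi.add_apply, E_ne hj, E_same]
      simp
    · simp only [Pi.add_apply, Pi.sub_apply, E_ne hj, E_ne hj', add_zero, sub_zero]
      exact Equiv.swap_apply_of_ne_of_ne (hx j l hj) (fun e => hx j l' hj' (e.trans h))

lemma hop_occ_swap {d k : ℕ} (l l' : Fin k) (v : Fin d → ℤ) {x : Conf d k} (hx : x ∈ SSet d k) (hv : v ≠ 0)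
    (h : x l + v = x l') : hop l v x = cswap l l' x := by
  have hne : l ≠ l' := by rintro rfl; exact hv (by simpa using h)
  funext j
  simp only [hop, cswap, Function.comp]
  rw [h]
  by_cases hj : j = l
  · subst hj; simp
  · by_cases hj' : j = l'
    · subst hj'; simp
    · rw [Equiv.swap_apply_of_ne_of_ne hj hj']
      exact Equiv.swap_apply_of_ne_of_ne (hx j l hj) (hx j l' hj')

/-- admissible configurations -/
abbrev XS (d k : ℕ) := {x : Conf d k // x ∈ SSet d k}

/-- hop permutation -/
def hopP {d k : ℕ} (a : Fin k × Dir d) : Equiv.Perm (XS d k) where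
  toFun x := ⟨hop a.1 (dv a.2) x.1, hop_mem _ _ x.2⟩
  invFun x := ⟨hop a.1 (-dv a.2) x.1, hop_mem _ _ x.2⟩
  left_inv x := Subtype.ext (hop_hop _ _ _)
  right_inv x := Subtype.ext (by simpa using hop_hop a.1 (-dv a.2) x.1)

/-- occupied target -/
def Occ {d k : ℕ} (a : Fin k × Dir d) (x : Conf d k) : Prop := ∃ l', x a.1 + dv a.2 = x l'

lemma Occ_sym {d k : ℕ} (a : Fin k × Dir d) (x : Conf d k) :
    Occ (a.1, dneg a.2) (hop a.1 (dv a.2) x) ↔ Occ a x := by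
  unfold Occ
  simp only [dv_dneg, hop_self, add_neg_cancel_right]
  refine exists_congr fun l' => ?_
  unfold hop
  rw [eq_comm, Equiv.swap_apply_eq_iff, Equiv.swap_apply_left, eq_comm]

/-- the exclusion system -/
def SX (d k : ℕ) : StepSys (XS d k) (Fin k × Dir d) where
  T := hopP
  inv a := (a.1, dneg a.2)
  inv_inv a := by simp [dneg_dneg]
  T_inv a x := Subtype.ext (by simp only [hopP, Equiv.coe_fn_mk, dv_dneg]; exact hop_hop _ _ _)
  c a x := if Occ a x.1 then 1/2 else 1
  c_lo a x := by split_ifs <;> norm_num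
  c_hi a x := by split_ifs <;> norm_num
  c_sym a x := by
    have := Occ_sym a x.1
    simp only [hopP, Equiv.coe_fn_mk, this]

lemma hopP_coe {d k : ℕ} (a : Fin k × Dir d) (x : XS d k) : (hopP a x).1 = hop a.1 (dv a.2) x.1 := rfl

lemma hop_pow {d k : ℕ} (i : Fin k) (p : Dir d) (x : XS d k) (r : ℕ) :
    ((hopP (i, p) ^ r) x).1 i = x.1 i + (r : ℤ) • dv p ∧
    ∀ j ≠ i, ((hopP (i, p) ^ r) x).1 j = x.1 j ∨
      (((hopP (i, p) ^ r) x).1 j = x.1 j - dv p ∧ ∃ m : ℕ, m < r ∧ ((hopP (i, p) ^ r) x).1 j = x.1 i + (m : ℤ) • dv p) := by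
  induction r with
  | zero => simp
  | succ r ih =>
    rw [pow_succ', Equiv.Perm.mul_apply, hopP_coe]
    set y := (hopP (i, p) ^ r) x with hy
    obtain ⟨h1, h2⟩ := ih
    refine ⟨?_, ?_⟩
    · rw [hop_self, h1]; push_cast; rw [add_smul, one_smul]; abel
    · intro j hj
      have hsm : ∀ m m' : ℤ, m • dv p = m' • dv p → m = m' := by
        intro m m' h
        exact smul_left_injective ℤ (dv_ne_zero p) h
      have hji : y.1 j ≠ y.1 i := y.2 j i hj
      rcases h2 j hj with h | ⟨h, m, hm, hm'⟩
      · by_cases hc : y.1 j = y.1 i + dv p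
        · right
          have e : hop i (dv p) y.1 j = y.1 i := by
            simp only [hop]; rw [hc, Equiv.swap_apply_right]
          refine ⟨?_, r, Nat.lt_succ_self r, ?_⟩
          · show hop i (dv p) y.1 j = _
            rw [e, ← h, hc]; abel
          · show hop i (dv p) y.1 j = _
            rw [e, h1]
        · left
          rw [← h]
          exact Equiv.swap_apply_of_ne_of_ne hji hc
      · right
        have hc : y.1 j ≠ y.1 i + dv p := by
          rw [hm', h1]
          intro e
          have e2 : (m:ℤ) • dv p = ((r:ℤ)+1) • dv p := by
            rw [add_smul, one_smul]; rw [add_assoc] at e; exact add_left_cancel e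
          have := hsm _ _ e2
          omega
        have e : hop i (dv p) y.1 j = y.1 j := Equiv.swap_apply_of_ne_of_ne hji hc
        refine ⟨?_, m, by omega, ?_⟩
        · show hop i (dv p) y.1 j = _
          rw [e, h]
        · show hop i (dv p) y.1 j = _
          rw [e, hm']

lemma hop_pow_err {d k : ℕ} (i : Fin k) (a : Fin d) (x : XS d k) (r : ℕ) (j : Fin k) (b : Fin d) :
    |((hopP (i, (a, true)) ^ r) x).1 j b - x.1 j b - (if (j, b) = (i, a) then (r:ℤ) else 0)| ≤ 1 := by
  obtain ⟨h1, h2⟩ := hop_pow i (a, true) x r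
  by_cases hj : j = i
  · subst hj
    rw [h1]
    by_cases hb : b = a <;> simp [dv, Pi.single_apply, hb]
  · have h0 : ¬ ((j, b) = (i, a)) := by simp [hj]
    rw [if_neg h0]
    rcases h2 j hj with h | ⟨h, -⟩
    · rw [h]; simp
    · rw [h]
      by_cases hb : b = a <;> simp [dv, Pi.single_apply, hb]

/-- product of straight moves along a list of coordinates -/
def gl {d k : ℕ} (r : Fin k × Fin d → ℕ) : List (Fin k × Fin d) → Equiv.Perm (XS d k)
  | [] => 1
  | q :: l => hopP (q.1, (q.2, true)) ^ (r q) * gl r l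

lemma gl_disp {d k : ℕ} (r : Fin k × Fin d → ℕ) (R : ℕ) (hr : ∀ q, r q ≤ R) (l : List (Fin k × Fin d)) :
    (SX d k).Disp (l.length * R) (gl r l) := by
  induction l with
  | nil => simpa [gl] using (SX d k).Disp_one
  | cons q l ih =>
    have h := (SX d k).Disp_pow_mul _ _ ih (q.1, (q.2, true)) (r q)
    refine (SX d k).Disp_mono _ _ ?_ _ h
    have := hr q
    simp only [List.length_cons]
    nlinarith

lemma gl_err {d k : ℕ} (r : Fin k × Fin d → ℕ) (l : List (Fin k × Fin d)) (hl : l.Nodup) (x : XS d k)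
    (q : Fin k × Fin d) :
    |(gl r l x).1 q.1 q.2 - x.1 q.1 q.2 - (if q ∈ l then (r q : ℤ) else 0)| ≤ l.length := by
  induction l with
  | nil => simp [gl]
  | cons q' l ih =>
    rw [List.nodup_cons] at hl
    have h1 := ih hl.2
    have h2 := hop_pow_err q'.1 q'.2 (gl r l x) (r q') q.1 q.2
    have e : gl r (q' :: l) x = (hopP (q'.1, (q'.2, true)) ^ (r q')) (gl r l x) := rfl
    rw [e]
    have e2 : (if q ∈ q' :: l then (r q : ℤ) else 0) = (if (q.1, q.2) = (q'.1, q'.2) then (r q' : ℤ) else 0) + (if q ∈ l then (r q : ℤ) else 0) := by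
      by_cases hq : q = q'
      · subst hq; simp [hl.1]
      · have hq' : ¬ ((q.1, q.2) = (q'.1, q'.2)) := hq
        rw [if_neg hq']; simp [hq]
    rw [e2]
    rw [List.length_cons, Nat.cast_add, Nat.cast_one]
    rw [abs_le] at *
    constructor <;> linarith [h1.1, h1.2, h2.1, h2.2]

lemma SX_nash (d k : ℕ) : (SX d k).NashHyp (Fin k × Fin d) (((2 * (k*d) + 1 : ℕ) : ℝ) ^ (k*d)) := by
  intro R hR
  refine ⟨fun r => gl (fun q => (r q : ℕ)) Finset.univ.toList, ?_, ?_⟩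
  · intro r
    have := gl_disp (fun q => (r q : ℕ)) R (fun q => (r q).2.le) (Finset.univ.toList)
    simpa using this
  · intro x y
    have key : ∀ r : Fin k × Fin d → Fin R, gl (fun q => (r q : ℕ)) Finset.univ.toList x = y → ∀ q,
        ((r q : ℕ) : ℤ) ∈ Finset.Icc (y.1 q.1 q.2 - x.1 q.1 q.2 - ((k * d : ℕ):ℤ)) (y.1 q.1 q.2 - x.1 q.1 q.2 + ((k * d : ℕ):ℤ)) := by
      intro r hr q
      have h := gl_err (fun q => (r q : ℕ)) Finset.univ.toList (Finset.nodup_toList _) x q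
      rw [hr] at h
      simp only [Finset.mem_toList, Finset.mem_univ, if_true, Finset.length_toList, Finset.card_univ, Fintype.card_prod, Fintype.card_fin] at h
      rw [abs_le] at h
      rw [Finset.mem_Icc]
      constructor <;> linarith [h.1, h.2]
    have hcard : (Finset.univ.filter fun r : Fin k × Fin d → Fin R => gl (fun q => (r q : ℕ)) Finset.univ.toList x = y).card ≤
        (Fintype.piFinset fun q : Fin k × Fin d => Finset.Icc (y.1 q.1 q.2 - x.1 q.1 q.2 - ((k * d : ℕ):ℤ)) (y.1 q.1 q.2 - x.1 q.1 q.2 + ((k * d : ℕ):ℤ))).card := by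
      refine Finset.card_le_card_of_injOn (fun r q => ((r q : ℕ) : ℤ)) ?_ ?_
      · intro r hr
        rw [Finset.mem_coe, Finset.mem_filter] at hr
        rw [Finset.mem_coe, Fintype.mem_piFinset]
        exact key r hr.2
      · intro r _ r' _ h
        funext q
        have := congrFun h q
        simp only [Nat.cast_inj] at this
        exact Fin.ext this
    rw [Fintype.card_piFinset] at hcard
    have e : ∀ q : Fin k × Fin d, (Finset.Icc (y.1 q.1 q.2 - x.1 q.1 q.2 - ((k * d : ℕ):ℤ)) (y.1 q.1 q.2 - x.1 q.1 q.2 + ((k * d : ℕ):ℤ))).card = 2 * (k*d) + 1 := by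
      intro q
      rw [Int.card_Icc]
      omega
    simp only [e, Finset.prod_const, Finset.card_univ, Fintype.card_prod, Fintype.card_fin] at hcard
    have hc : ((Finset.univ.filter fun r : Fin k × Fin d → Fin R => gl (fun q => (r q : ℕ)) Finset.univ.toList x = y).card : ℝ) ≤
        ((2 * (k*d) + 1 : ℕ) : ℝ) ^ (k*d) := by exact_mod_cast hcard
    convert hc

lemma sumsq_one {ι : Type*} [Fintype ι] (z : ι → ℤ) (h : ∑ i, (z i)^2 = 1) :
    ∃ i, ∃ s : Bool, z = Pi.single i (if s then 1 else -1) := by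
  have hne : ∃ i, z i ≠ 0 := by
    by_contra hc
    push Not at hc
    simp [hc] at h
  obtain ⟨i, hi⟩ := hne
  have h1 := Finset.add_sum_erase Finset.univ (fun i => (z i)^2) (Finset.mem_univ i)
  have h2 : 1 ≤ (z i)^2 := by
    have : 0 < (z i)^2 := by positivity
    omega
  have h3 : 0 ≤ ∑ j ∈ Finset.univ.erase i, (z j)^2 := Finset.sum_nonneg fun j _ => sq_nonneg _
  have h4 : ∑ j ∈ Finset.univ.erase i, (z j)^2 = 0 := by omega
  rw [Finset.sum_eq_zero_iff_of_nonneg (fun j _ => sq_nonneg _)] at h4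
  have h5 : (z i)^2 = 1 := by
    have : ∑ j ∈ Finset.univ.erase i, (z j)^2 = 0 := Finset.sum_eq_zero h4
    omega
  have h6 : ∀ j, j ≠ i → z j = 0 := fun j hj => by
    have := h4 j (by simp [hj])
    simpa using this
  have h7 : z i = 1 ∨ z i = -1 := by
    have : (z i - 1) * (z i + 1) = 0 := by ring_nf; omega
    rcases mul_eq_zero.1 this with h | h
    · left; omega
    · right; omega
  rcases h7 with h | h
  · refine ⟨i, true, ?_⟩
    funext j
    by_cases hj : j = i
    · subst hj; simp [h]
    · simp [h6 j hj, hj]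
  · refine ⟨i, false, ?_⟩
    funext j
    by_cases hj : j = i
    · subst hj; simp [h]
    · simp [h6 j hj, hj]

lemma vnorm_one {d : ℕ} (v : Fin d → ℤ) : vnorm v = 1 ↔ ∃ p, v = dv p := by
  unfold vnorm
  rw [Real.sqrt_eq_one]
  constructor
  · intro h
    obtain ⟨a, s, h⟩ := sumsq_one v (by exact_mod_cast h)
    exact ⟨(a, s), by rw [h]; funext b; simp [dv, Pi.single_apply]⟩
  · rintro ⟨⟨a, s⟩, rfl⟩
    rw [Finset.sum_eq_single a]
    · cases s <;> simp [dv]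
    · intro b _ hb; simp [dv, hb]
    · simp

lemma cnorm_one {d k : ℕ} (v : Conf d k) : cnorm v = 1 ↔ ∃ a : Fin k × Dir d, v = E a.1 (dv a.2) := by
  unfold cnorm
  rw [Real.sqrt_eq_one]
  constructor
  · intro h
    have h' : ∑ q : Fin k × Fin d, (v q.1 q.2)^2 = 1 := by
      rw [Fintype.sum_prod_type]; exact_mod_cast h
    obtain ⟨⟨l, a⟩, s, h⟩ := sumsq_one (fun q : Fin k × Fin d => v q.1 q.2) h'
    refine ⟨(l, (a, s)), ?_⟩
    funext j b
    have := congrFun h (j, b)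
    simp only at this
    rw [this]
    by_cases hj : j = l <;> by_cases hb : b = a <;> simp [E_apply, dv, Pi.single_apply, hj, hb]
  · rintro ⟨⟨l, p⟩, rfl⟩
    rw [Finset.sum_eq_single l]
    · have := (vnorm_one (dv p)).2 ⟨p, rfl⟩
      rw [vnorm, Real.sqrt_eq_one] at this
      simpa [E_same] using this
    · intro b _ hb; simp [E_ne hb]
    · simp

lemma E_inj {d k : ℕ} {a b : Fin k × Dir d} (h : E a.1 (dv a.2) = E b.1 (dv b.2)) : a = b := by
  obtain ⟨l, p⟩ := a
  obtain ⟨l', p'⟩ := b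
  have h1 := congrFun h l
  simp only [E_apply] at h1
  by_cases hl : l = l'
  · subst hl
    simp only [if_true] at h1
    rw [dv_inj h1]
  · simp only [hl, if_true, if_false] at h1
    exact absurd h1 (dv_ne_zero p)

lemma SX_c {d k : ℕ} (a : Fin k × Dir d) (x : XS d k) : (SX d k).c a x = if Occ a x.1 then 1/2 else 1 := rfl
lemma SX_T {d k : ℕ} (a : Fin k × Dir d) (x : XS d k) : ((SX d k).T a x).1 = hop a.1 (dv a.2) x.1 := rfl

/-- `SX.L` for restrictions of functions on all configurations -/
lemma SX_L_res {d k : ℕ} (f : Conf d k → ℝ) (x : XS d k) :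
    (SX d k).L (fun z => f z.1) x =
      ∑ a : Fin k × Dir d, ((if ¬ Occ a x.1 then f (x.1 + E a.1 (dv a.2)) - f x.1 else 0) +
        ∑ l', if x.1 a.1 + dv a.2 = x.1 l' then (1/2) * (f (x.1 + E a.1 (dv a.2) - E l' (dv a.2)) - f x.1) else 0) := by
  rw [StepSys.L_apply]
  refine Finset.sum_congr rfl fun a _ => ?_
  rw [SX_c]
  simp only [SX_T]
  by_cases h : Occ a x.1
  · have h' := h
    obtain ⟨l', hl'⟩ := h
    rw [if_pos h', if_neg (by simpa using h'), zero_add, hop_occ a.1 l' _ x.2 (dv_ne_zero _) hl',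
      Finset.sum_eq_single l']
    · rw [if_pos hl']
    · intro b _ hb
      rw [if_neg]
      intro e
      exact x.2 b l' hb (e.symm.trans hl')
    · simp
  · rw [if_neg h, if_pos h, one_mul, hop_unocc a.1 _ x.2 h, Finset.sum_eq_zero, add_zero]
    intro l' _
    rw [if_neg]
    intro e
    exact h ⟨l', e⟩

lemma add_E_mem {d k : ℕ} (a : Fin k × Dir d) {x : Conf d k} (hx : x ∈ SSet d k) :
    x + E a.1 (dv a.2) ∈ SSet d k ↔ ¬ Occ a x := by
  constructor
  · rintro h ⟨l', hl'⟩
    have hne : a.1 ≠ l' := by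
      intro e; rw [← e] at hl'; exact dv_ne_zero a.2 (by simpa using hl')
    apply h a.1 l' hne
    simp [E_same, E_ne hne.symm, hl']
  · intro h
    rw [← hop_unocc a.1 _ hx h]
    exact hop_mem _ _ hx

lemma Lexc_eq {d k : ℕ} (f : Conf d k → ℝ) (x : XS d k) :
    Lexc f x.1 = (SX d k).L (fun z => f z.1) x := by
  rw [SX_L_res, Finset.sum_add_distrib]
  unfold Lexc
  congr 1
  · have hinj : Function.Injective (fun a : Fin k × Dir d => x.1 + E a.1 (dv a.2)) := by
      intro a b h
      exact E_inj (add_left_cancel h)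
    rw [← hinj.tsum_eq, tsum_fintype]
    · refine Finset.sum_congr rfl fun a _ => ?_
      have h1 : cnorm (x.1 + E a.1 (dv a.2) - x.1) = 1 := by
        rw [cnorm_one]; exact ⟨a, by abel⟩
      have := add_E_mem a x.2
      simp only [h1, this, true_and]
    · intro y hy
      rw [Function.mem_support] at hy
      by_contra hc
      apply hy
      rw [if_neg]
      rintro ⟨h1, -⟩
      rw [cnorm_one] at h1
      obtain ⟨a, ha⟩ := h1
      exact hc ⟨a, by simp only; rw [← ha]; abel⟩
  · have hsw : ∀ i j, cswap i j x.1 = cswap j i x.1 := by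
      intro i j; unfold cswap; rw [Equiv.swap_comm]
    set g : Fin k → Fin k → ℝ := fun i j => if vnorm (x.1 i - x.1 j) = 1 then f (cswap i j x.1) - f x.1 else 0 with hg
    have hvs : ∀ i j, vnorm (x.1 i - x.1 j) = vnorm (x.1 j - x.1 i) := by
      intro i j
      unfold vnorm
      congr 1
      refine Finset.sum_congr rfl fun b _ => ?_
      simp only [Pi.sub_apply]; push_cast; ring
    have gs : ∀ i j, g i j = g j i := by
      intro i j; simp only [hg, hsw i j, hvs i j]
    have gd : ∀ i, g i i = 0 := by
      intro i; simp [hg, vnorm]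
    have e1 : (∑ i : Fin k, ∑ j : Fin k, if i < j ∧ vnorm (x.1 i - x.1 j) = 1 ∧ x.1 ∈ SSet d k then f (cswap i j x.1) - f x.1 else 0)
        = ∑ i, ∑ j, if i < j then g i j else 0 := by
      refine Finset.sum_congr rfl fun i _ => Finset.sum_congr rfl fun j _ => ?_
      have := x.2
      by_cases h : i < j <;> simp [h, hg, this]
    have e2 : ∑ i, ∑ j, g i j = 2 * ∑ i, ∑ j, if i < j then g i j else 0 := by
      have : ∀ i j, g i j = (if i < j then g i j else 0) + (if j < i then g j i else 0) := by
        intro i j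
        rcases lt_trichotomy i j with h | h | h
        · simp [h, h.not_gt]
        · subst h; simp [gd]
        · simp [h, h.not_gt, gs i j]
      have h2 : ∑ i, ∑ j, g i j = ∑ i, ∑ j, ((if i < j then g i j else 0) + (if j < i then g j i else 0)) :=
        Finset.sum_congr rfl fun i _ => Finset.sum_congr rfl fun j _ => this i j
      rw [h2]
      simp only [Finset.sum_add_distrib]
      rw [Finset.sum_comm (f := fun i j => if j < i then g j i else 0)]
      ring
    have e3 : ∀ i j, g i j = ∑ p : Dir d, if x.1 i + dv p = x.1 j then (f (x.1 + E i (dv p) - E j (dv p)) - f x.1) else 0 := by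
      intro i j
      by_cases h : vnorm (x.1 i - x.1 j) = 1
      · simp only [hg, if_pos h]
        rw [hvs, vnorm_one] at h
        obtain ⟨p, hp⟩ := h
        have hp' : x.1 i + dv p = x.1 j := by rw [← hp]; abel
        rw [Finset.sum_eq_single p]
        · rw [if_pos hp', ← hop_occ i j _ x.2 (dv_ne_zero _) hp', hop_occ_swap i j _ x.2 (dv_ne_zero _) hp']
        · intro q _ hq
          rw [if_neg]
          intro e
          exact hq (dv_inj (add_left_cancel (e.trans hp'.symm)))
        · simp
      · simp only [hg, if_neg h]
        symm
        apply Finset.sum_eq_zero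
        intro p _
        rw [if_neg]
        intro e
        apply h
        rw [hvs, vnorm_one]
        exact ⟨p, by rw [← e]; abel⟩
    rw [e1]
    have e4 : (∑ i, ∑ j, if i < j then g i j else 0) = (1/2) * ∑ i, ∑ j, g i j := by rw [e2]; ring
    rw [e4, Fintype.sum_prod_type, Finset.mul_sum]
    refine Finset.sum_congr rfl fun i _ => ?_
    rw [Finset.sum_comm, Finset.mul_sum]
    refine Finset.sum_congr rfl fun j _ => ?_
    simp only [e3, Finset.mul_sum]
    refine Finset.sum_congr rfl fun p _ => ?_
    rw [mul_ite, mul_zero]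

lemma Lexc_iter {d k : ℕ} (f : Conf d k → ℝ) (n : ℕ) (x : XS d k) :
    ((Lexc (d := d) (k := k))^[n] f) x.1 = (((SX d k).L ^ n) (fun z => f z.1)) x := by
  induction n generalizing x with
  | zero => rfl
  | succ n ih =>
    rw [Function.iterate_succ_apply', Lexc_eq, pow_succ', Module.End.mul_apply]
    have e : (fun z : XS d k => (Lexc^[n] f) z.1) = ((SX d k).L ^ n) (fun z => f z.1) := funext ih
    rw [e]

/-- number of oriented contacts -/
def NN {d k : ℕ} (x : Conf d k) : ℝ :=
  ∑ a : Fin k × Dir d, ∑ l', if x a.1 + dv a.2 = x l' then 1 else 0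

/-- sum over all shifts -/
def LR {d k : ℕ} (f : Conf d k → ℝ) (x : Conf d k) : ℝ :=
  ∑ a : Fin k × Dir d, (f (x + E a.1 (dv a.2)) - f x)

lemma V_formula {d k : ℕ} (f : Conf d k → ℝ) (x : XS d k) :
    (SX d k).L (fun z => f z.1) x = LR f x.1 + (1/2) * ∑ a : Fin k × Dir d, ∑ l',
      if x.1 a.1 + dv a.2 = x.1 l' then
        (f (x.1 + E a.1 (dv a.2) - E l' (dv a.2)) + f x.1 - f (x.1 + E a.1 (dv a.2)) - f (x.1 - E l' (dv a.2))) else 0 := by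
  rw [SX_L_res]
  unfold LR
  have h1 : ∀ a : Fin k × Dir d, (if ¬ Occ a x.1 then f (x.1 + E a.1 (dv a.2)) - f x.1 else 0) =
      (f (x.1 + E a.1 (dv a.2)) - f x.1) - ∑ l', if x.1 a.1 + dv a.2 = x.1 l' then (f (x.1 + E a.1 (dv a.2)) - f x.1) else 0 := by
    intro a
    by_cases h : Occ a x.1
    · have h' := h
      obtain ⟨l', hl'⟩ := h
      rw [if_neg (by simpa using h'), Finset.sum_eq_single l']
      · rw [if_pos hl']; ring
      · intro b _ hb
        rw [if_neg]
        intro e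
        exact x.2 b l' hb (e.symm.trans hl')
      · simp
    · rw [if_pos h, Finset.sum_eq_zero, sub_zero]
      intro l' _
      rw [if_neg]
      intro e
      exact h ⟨l', e⟩
  -- symmetrization
  have h2 : (∑ a : Fin k × Dir d, ∑ l', if x.1 a.1 + dv a.2 = x.1 l' then (f (x.1 + E a.1 (dv a.2)) - f x.1) else 0) =
      ∑ a : Fin k × Dir d, ∑ l', if x.1 a.1 + dv a.2 = x.1 l' then (f (x.1 - E l' (dv a.2)) - f x.1) else 0 := by
    simp only [Fintype.sum_prod_type (α₁ := Fin k)]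
    have : ∀ (g : Fin k → Dir d → Fin k → ℝ), ∑ i, ∑ p, ∑ j, g i p j = ∑ p, ∑ i, ∑ j, g i p j := by
      intro g; rw [Finset.sum_comm]
    rw [this, this]
    let e : Dir d ≃ Dir d := ⟨dneg, dneg, dneg_dneg, dneg_dneg⟩
    rw [← Equiv.sum_comp e]
    refine Finset.sum_congr rfl fun p _ => ?_
    rw [Finset.sum_comm]
    refine Finset.sum_congr rfl fun i _ => Finset.sum_congr rfl fun j _ => ?_
    have hE : E (k := k) j (dv (dneg p)) = - E j (dv p) := by
      rw [dv_dneg]; funext j'; simp only [E_apply, Pi.neg_apply]; split_ifs <;> simp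
    have hc : (x.1 j + dv (dneg p) = x.1 i) ↔ (x.1 i + dv p = x.1 j) := by
      rw [dv_dneg, ← sub_eq_add_neg, sub_eq_iff_eq_add, eq_comm]
    show (if x.1 j + dv (dneg p) = x.1 i then f (x.1 + E j (dv (dneg p))) - f x.1 else 0) = _
    simp only [hc, hE, ← sub_eq_add_neg]
  have h3 : (∑ a : Fin k × Dir d, ∑ l', if x.1 a.1 + dv a.2 = x.1 l' then
        (f (x.1 + E a.1 (dv a.2) - E l' (dv a.2)) + f x.1 - f (x.1 + E a.1 (dv a.2)) - f (x.1 - E l' (dv a.2))) else 0)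
      = 2 * (∑ a : Fin k × Dir d, ∑ l', if x.1 a.1 + dv a.2 = x.1 l' then (1/2) * (f (x.1 + E a.1 (dv a.2) - E l' (dv a.2)) - f x.1) else 0)
       - (∑ a : Fin k × Dir d, ∑ l', if x.1 a.1 + dv a.2 = x.1 l' then (f (x.1 + E a.1 (dv a.2)) - f x.1) else 0)
       - (∑ a : Fin k × Dir d, ∑ l', if x.1 a.1 + dv a.2 = x.1 l' then (f (x.1 - E l' (dv a.2)) - f x.1) else 0) := by
    simp only [Finset.mul_sum, ← Finset.sum_sub_distrib]
    refine Finset.sum_congr rfl fun i _ => Finset.sum_congr rfl fun j _ => ?_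
    split_ifs
    · ring
    · ring
  rw [h3, ← h2]
  simp only [h1, Finset.sum_add_distrib, Finset.sum_sub_distrib]
  ring

lemma hs_congr {M : Type*} [AddCommMonoid M] [TopologicalSpace M] {f g : ℕ → M} {a b : M}
    (h : HasSum g b) (h1 : ∀ n, f n = g n) (h2 : a = b) : HasSum f a := by
  have : f = g := funext h1
  rw [this, h2]; exact h

section BA
open NormedSpace
variable {𝔸 : Type*} [NormedRing 𝔸] [NormedAlgebra ℝ 𝔸] [CompleteSpace 𝔸] [NormOneClass 𝔸]

lemma ba_exp_add {x y : 𝔸} (h : Commute x y) : exp (x + y) = exp x * exp y :=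
  exp_add_of_commute_of_mem_ball (𝕂 := ℝ) h ((expSeries_radius_eq_top ℝ 𝔸).symm ▸ edist_lt_top _ _)
    ((expSeries_radius_eq_top ℝ 𝔸).symm ▸ edist_lt_top _ _)

lemma ba_hasSum (S : 𝔸) (r : ℝ) : HasSum (fun n : ℕ => (r ^ n / n.factorial) • S ^ n) (exp (r • S)) := by
  have h := exp_series_hasSum_exp' (𝕂 := ℝ) (r • S)
  refine hs_congr h ?_ rfl
  intro n
  rw [smul_pow, smul_smul]
  congr 1
  rw [mul_comm]; rfl

lemma real_hasSum (r : ℝ) : HasSum (fun n : ℕ => r ^ n / n.factorial) (Real.exp r) := by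
  rw [Real.exp_eq_exp_ℝ]
  exact expSeries_div_hasSum_exp r

lemma ba_norm_exp (Z : 𝔸) (c r : ℝ) (hr : 0 ≤ r) (h : ‖Z‖ ≤ c) : ‖exp (r • Z)‖ ≤ Real.exp (r * c) := by
  have h1 := ba_hasSum Z r
  have h2 := real_hasSum (r * c)
  refine h1.norm_le_of_bounded h2 ?_
  intro n
  rw [norm_smul, Real.norm_of_nonneg (by positivity), mul_pow, mul_div_right_comm]
  exact mul_le_mul_of_nonneg_left ((norm_pow_le Z n).trans (pow_le_pow_left₀ (norm_nonneg _) h n)) (by positivity)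

lemma ba_exp_sub (Z : 𝔸) (c r : ℝ) : exp (r • (Z - c • (1:𝔸))) = Real.exp (-(r * c)) • exp (r • Z) := by
  have e : r • (Z - c • (1:𝔸)) = algebraMap ℝ 𝔸 (-(r * c)) + r • Z := by
    rw [Algebra.algebraMap_eq_smul_one, smul_sub, smul_smul, neg_smul]; abel
  rw [e, ba_exp_add (Algebra.commutes _ _), ← algebraMap_exp_comm, ← Real.exp_eq_exp_ℝ, Algebra.smul_def (Real.exp (-(r * c)))]

lemma ba_contr (Z : 𝔸) (c r : ℝ) (hr : 0 ≤ r) (h : ‖Z‖ ≤ c) : ‖exp (r • (Z - c • (1:𝔸)))‖ ≤ 1 := by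
  rw [ba_exp_sub, norm_smul, Real.norm_of_nonneg (Real.exp_pos _).le]
  calc _ ≤ Real.exp (-(r*c)) * Real.exp (r * c) := by gcongr; exact ba_norm_exp Z c r hr h
    _ = 1 := by rw [← Real.exp_add]; simp

lemma ba_shift (S : 𝔸) (r : ℝ) (hr : 0 < r) (f : ℕ → ℝ) {s : 𝔸}
    (h : HasSum (fun n : ℕ => (f n * (r ^ n / n.factorial)) • S ^ (n+1)) s) :
    HasSum (fun n : ℕ => ((n / r) * f (n-1) * (r ^ n / n.factorial)) • S ^ n) s := by
  rw [← hasSum_nat_add_iff' 1]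
  simp only [Finset.range_one, Finset.sum_singleton, Nat.cast_zero, zero_div, zero_mul, zero_smul, sub_zero]
  refine hs_congr h ?_ rfl
  intro n
  congr 1
  rw [Nat.add_sub_cancel, Nat.factorial_succ]
  push_cast
  have : (n.factorial : ℝ) ≠ 0 := by positivity
  have : (n:ℝ) + 1 ≠ 0 := by positivity
  field_simp
  try ring

lemma ba_grad_sum (S : 𝔸) (r : ℝ) (hr : 0 < r) :
    HasSum (fun n : ℕ => ((n / r - 1) * (r ^ n / n.factorial)) • S ^ n) ((S - 1) * exp (r • S)) := by
  have h0 := ba_hasSum S r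
  have h1 : HasSum (fun n : ℕ => ((fun _ => (1:ℝ)) n * (r ^ n / n.factorial)) • S ^ (n+1)) (S * exp (r • S)) := by
    refine hs_congr (h0.mul_left S) ?_ rfl
    intro n
    rw [one_mul, mul_smul_comm, pow_succ']
  have h2 := (ba_shift S r hr _ h1).sub h0
  rw [sub_mul, one_mul]
  refine hs_congr h2 ?_ rfl
  intro n
  rw [← sub_smul]; congr 1; ring

lemma poisson_var (r : ℝ) (hr : 0 < r) :
    HasSum (fun n : ℕ => (n / r - 1)^2 * (r ^ n / n.factorial)) (Real.exp r / r) := by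
  have h0 := real_hasSum r
  have h1 : HasSum (fun n : ℕ => ((n / r)) * (r ^ n / n.factorial)) (Real.exp r) := by
    have := ba_shift (1:ℝ) r hr (fun _ => 1) (s := Real.exp r) (by simpa using h0)
    simpa using this
  have h2 : HasSum (fun n : ℕ => (n / r)^2 * (r ^ n / n.factorial)) (Real.exp r + Real.exp r / r) := by
    have := ba_shift (1:ℝ) r hr (fun n => n / r + 1 / r) (s := Real.exp r + (1/r) * Real.exp r)
      (by
        refine hs_congr (h1.add (h0.mul_left (1/r))) ?_ rfl
        intro n
        simp only [one_pow, smul_eq_mul, mul_one]; ring)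
    refine hs_congr this ?_ (by ring)
    intro n
    rcases n with _ | n
    · simp
    · simp only [Nat.add_sub_cancel, one_pow, smul_eq_mul, mul_one]; push_cast; ring
  have h3 := (h2.sub (h1.mul_left 2)).add h0
  exact hs_congr h3 (fun n => by ring) (by ring)

lemma ba_grad (S : 𝔸) (hS : ‖S‖ ≤ 1) (r : ℝ) (hr : 0 < r) :
    ‖(S - 1) * exp (r • (S - (1:ℝ) • (1:𝔸)))‖ ≤ 1 / √r := by
  rw [ba_exp_sub, mul_smul_comm, norm_smul, Real.norm_of_nonneg (Real.exp_pos _).le]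
  have hs : 0 < √r := Real.sqrt_pos.2 hr
  have hs2 : √r * √r = r := Real.mul_self_sqrt hr.le
  have h1 := ba_grad_sum S r hr
  have h2 := ((real_hasSum r).mul_left (1 / (2 * √r))).add ((poisson_var r hr).mul_left (√r/2))
  have h3 : ‖(S - 1) * exp (r • S)‖ ≤ 1 / (2 * √r) * Real.exp r + √r/2 * (Real.exp r / r) := by
    refine h1.norm_le_of_bounded h2 ?_
    intro n
    rw [norm_smul, norm_mul, Real.norm_eq_abs, Real.norm_of_nonneg (by positivity : 0 ≤ r^n / (n.factorial:ℝ))]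
    have hp : ‖S ^ n‖ ≤ 1 := (norm_pow_le S n).trans (pow_le_one₀ (norm_nonneg _) hS)
    have hq : |(n:ℝ)/r - 1| ≤ 1 / (2 * √r) + √r/2 * ((n:ℝ)/r - 1)^2 := by
      set z := |(n:ℝ)/r - 1| with hz
      have hz2 : z^2 = ((n:ℝ)/r - 1)^2 := sq_abs _
      rw [← hz2]
      have h5 : 0 ≤ (1/(2*√r)) * (√r * z - 1)^2 := by positivity
      have h6 : (1/(2*√r)) * (√r * z - 1)^2 = 1 / (2 * √r) + √r/2 * z^2 - z := by
        field_simp; ring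
      linarith
    calc _ ≤ |(n:ℝ)/r - 1| * (r^n/(n.factorial:ℝ)) * 1 := by gcongr
      _ ≤ (1 / (2 * √r) + √r/2 * ((n:ℝ)/r - 1)^2) * (r^n/(n.factorial:ℝ)) := by rw [mul_one]; gcongr
      _ = _ := by ring
  have h4 : √r/2 * (Real.exp r / r) = 1/(2*√r) * Real.exp r := by
    have : √r / r = 1/√r := by rw [div_eq_div_iff hr.ne' hs.ne']; linarith
    calc _ = (√r / r) * Real.exp r / 2 := by ring
      _ = _ := by rw [this]; field_simp
  calc _ ≤ Real.exp (-(r*1)) * (1 / (2 * √r) * Real.exp r + √r/2 * (Real.exp r / r)) := by gcongr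
    _ = Real.exp (-r) * Real.exp r * (1/√r) := by rw [h4]; field_simp; ring_nf
    _ = 1/√r := by rw [← Real.exp_add]; simp

end BA

section BA2
open NormedSpace MeasureTheory
variable {𝔸 : Type*} [NormedRing 𝔸] [NormedAlgebra ℝ 𝔸] [CompleteSpace 𝔸] [NormOneClass 𝔸]

lemma gamma_int (s α : ℝ) (hs : 0 < s) (hα : 0 < α) :
    IntegrableOn (fun r : ℝ => r ^ (s - 1) * Real.exp (-(α * r))) (Set.Ioi 0) ∧
    ∫ r in Set.Ioi (0:ℝ), r ^ (s - 1) * Real.exp (-(α * r)) = (1/α)^s * Real.Gamma s := by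
  refine ⟨?_, Real.integral_rpow_mul_exp_neg_mul_Ioi hs hα⟩
  have := integrableOn_rpow_mul_exp_neg_mul_rpow (p := 1) (s := s - 1) (b := α) (by linarith) one_pos hα
  refine this.congr_fun ?_ measurableSet_Ioi
  intro r hr
  simp

/-- abstract resolvent estimates for sums of commuting contractions -/
theorem ba_resolvent {J : Type*} [Fintype J] (S : J → 𝔸) (hS : ∀ j, ‖S j‖ ≤ 1)
    (hc : ∀ i j, Commute (S i) (S j)) (α : ℝ) (hα : 0 < α) :
    ∃ G : 𝔸, (α • (1:𝔸) - ∑ j, (S j - 1)) * G = 1 ∧ 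
      (∀ i, ‖(S i - 1) * G‖ ≤ (1/α)^(1/2:ℝ) * Real.Gamma (1/2)) ∧
      (∀ i j, i ≠ j → ∀ δ : ℝ, 0 < δ → δ ≤ 1 →
        ‖(S i - 1) * (S j - 1) * G‖ ≤ 4 ^ δ * ((1/α)^δ * Real.Gamma δ)) := by
  set Λ : Finset J → 𝔸 := fun s => ∑ j ∈ s, (S j - 1) with hΛ
  have hΛc : ∀ (s t : Finset J) , Commute (Λ s) (Λ t) := by
    intro s t
    refine Commute.sum_left _ _ _ fun i _ => Commute.sum_right _ _ _ fun j _ => ?_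
    exact ((hc i j).sub_left (Commute.one_left _)).sub_right ((Commute.one_right _))
  have hΛn : ∀ s (r : ℝ), 0 ≤ r → ‖exp (r • Λ s)‖ ≤ 1 := by
    intro s r hr
    have e : Λ s = (∑ j ∈ s, S j) - (s.card : ℝ) • (1:𝔸) := by
      simp only [hΛ, Finset.sum_sub_distrib, Finset.sum_const]
      rw [Nat.cast_smul_eq_nsmul]
    rw [e]
    refine ba_contr _ _ r hr ?_
    refine (norm_sum_le _ _).trans ?_
    refine (Finset.sum_le_card_nsmul _ _ 1 fun j _ => hS j).trans ?_
    simp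
  have hsplit : ∀ s i (r : ℝ), i ∈ s → exp (r • Λ s) = exp (r • (S i - (1:ℝ) • (1:𝔸))) * exp (r • Λ (s.erase i)) := by
    intro s i r hi
    have e1 : Λ s = Λ {i} + Λ (s.erase i) := by
      simp only [hΛ]
      rw [Finset.sum_singleton, Finset.add_sum_erase s (fun j => S j - 1) hi]
    have e2 : S i - (1:ℝ) • (1:𝔸) = Λ {i} := by simp [hΛ]
    rw [e2, e1, smul_add]
    refine ba_exp_add ?_
    exact ((hΛc _ _).smul_left r).smul_right r
  have hg1 : ∀ s i (r : ℝ), 0 < r → i ∈ s → ‖(S i - 1) * exp (r • Λ s)‖ ≤ 1 / √r := by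
    intro s i r hr hi
    rw [hsplit s i r hi, ← mul_assoc]
    calc _ ≤ ‖(S i - 1) * exp (r • (S i - (1:ℝ) • (1:𝔸)))‖ * ‖exp (r • Λ (s.erase i))‖ := norm_mul_le _ _
      _ ≤ (1/√r) * 1 := mul_le_mul (ba_grad _ (hS i) r hr) (hΛn _ r hr.le) (norm_nonneg _) (by positivity)
      _ = _ := mul_one _
  have hn2 : ∀ i, ‖S i - 1‖ ≤ 2 := by
    intro i
    calc _ ≤ ‖S i‖ + ‖(1:𝔸)‖ := norm_sub_le _ _
      _ ≤ 1 + 1 := add_le_add (hS i) (by simp)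
      _ = 2 := by norm_num
  have hg2 : ∀ i j (r : ℝ), 0 < r → i ≠ j → ‖(S i - 1) * (S j - 1) * exp (r • Λ Finset.univ)‖ ≤ 1 / r := by
    intro i j r hr hij
    rw [hsplit Finset.univ i r (Finset.mem_univ i)]
    have hcm : Commute (S j - 1) (exp (r • (S i - (1:ℝ) • (1:𝔸)))) := by
      apply Commute.exp_right
      refine Commute.smul_right ?_ r
      rw [one_smul]
      exact ((hc j i).sub_left (Commute.one_left _)).sub_right ((Commute.one_right _))
    have e : (S i - 1) * (S j - 1) * (exp (r • (S i - (1:ℝ) • (1:𝔸))) * exp (r • Λ (Finset.univ.erase i)))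
        = ((S i - 1) * exp (r • (S i - (1:ℝ) • (1:𝔸)))) * ((S j - 1) * exp (r • Λ (Finset.univ.erase i))) := by
      rw [mul_assoc, ← mul_assoc (S j - 1), hcm.eq]; simp only [mul_assoc]
    rw [e]
    calc _ ≤ ‖(S i - 1) * exp (r • (S i - (1:ℝ) • (1:𝔸)))‖ * ‖(S j - 1) * exp (r • Λ (Finset.univ.erase i))‖ := norm_mul_le _ _
      _ ≤ (1/√r) * (1/√r) := mul_le_mul (ba_grad _ (hS i) r hr) (hg1 _ j r hr (by simp [hij.symm])) (norm_nonneg _) (by positivity)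
      _ = 1 / r := by rw [div_mul_div_comm, one_mul, Real.mul_self_sqrt hr.le]
  set W := Λ Finset.univ - α • (1:𝔸) with hW
  have hP : ∀ r : ℝ, exp (r • W) = Real.exp (-(α * r)) • exp (r • Λ Finset.univ) := by
    intro r; rw [hW, ba_exp_sub, mul_comm]
  have hPn : ∀ r : ℝ, 0 ≤ r → ‖exp (r • W)‖ ≤ Real.exp (-(α * r)) := by
    intro r hr
    rw [hP, norm_smul, Real.norm_of_nonneg (Real.exp_pos _).le]
    exact mul_le_of_le_one_right (Real.exp_pos _).le (hΛn _ r hr)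
  have hcont : Continuous fun r : ℝ => exp (r • W) := (differentiable_exp_smul_const ℝ W).continuous
  have hexpint : IntegrableOn (fun r : ℝ => Real.exp (-(α * r))) (Set.Ioi 0) := by
    have := (gamma_int 1 α one_pos hα).1
    simpa using this
  have hint : IntegrableOn (fun r : ℝ => exp (r • W)) (Set.Ioi 0) := by
    refine Integrable.mono' hexpint hcont.aestronglyMeasurable ?_
    refine (ae_restrict_iff' measurableSet_Ioi).2 (Filter.Eventually.of_forall fun r hr => hPn r (le_of_lt hr))
  have hmul : ∀ a : 𝔸, a * ∫ r in Set.Ioi (0:ℝ), exp (r • W) = ∫ r in Set.Ioi (0:ℝ), a * exp (r • W) := by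
    intro a
    rw [integral_const_mul_of_integrable hint]
  have hbound : ∀ (a : 𝔸) (s C : ℝ), 0 < s → (∀ r, 0 < r → ‖a * exp (r • Λ Finset.univ)‖ ≤ C * r^(s-1)) →
      ‖a * ∫ r in Set.Ioi (0:ℝ), exp (r • W)‖ ≤ C * ((1/α)^s * Real.Gamma s) := by
    intro a s C hs h
    rw [hmul]
    obtain ⟨h1, h2⟩ := gamma_int s α hs hα
    rw [← h2, ← integral_const_mul]
    refine norm_integral_le_of_norm_le (h1.const_mul C) ?_
    refine (ae_restrict_iff' measurableSet_Ioi).2 (Filter.Eventually.of_forall fun r hr => ?_)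
    rw [hP, mul_smul_comm, norm_smul, Real.norm_of_nonneg (Real.exp_pos _).le, ← mul_assoc, mul_comm]
    exact mul_le_mul_of_nonneg_right (h r hr) (Real.exp_pos _).le
  refine ⟨∫ r in Set.Ioi (0:ℝ), exp (r • W), ?_, ?_, ?_⟩
  · have e : α • (1:𝔸) - ∑ j, (S j - 1) = - W := by rw [hW]; simp [hΛ]
    rw [e, neg_mul, hmul]
    have := integral_Ioi_of_hasDerivAt_of_tendsto' (a := (0:ℝ)) (f := fun r : ℝ => exp (r • W)) (f' := fun r => W * exp (r • W)) (m := 0)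
      (fun r _ => hasDerivAt_exp_smul_const' W r) (hint.const_mul W) (by
        refine squeeze_zero_norm' (a := fun r => Real.exp (-(α * r))) ?_ ?_
        · filter_upwards [Filter.eventually_ge_atTop 0] with r hr using hPn r hr
        · exact Real.tendsto_exp_neg_atTop_nhds_zero.comp (Filter.tendsto_id.const_mul_atTop hα))
    rw [this]; simp
  · intro i
    have := hbound (S i - 1) (1/2) 1 (by norm_num) (fun r hr => by
      refine (hg1 _ i r hr (Finset.mem_univ _)).trans (le_of_eq ?_)
      rw [one_mul, Real.sqrt_eq_rpow, one_div, ← Real.rpow_neg hr.le]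
      norm_num)
    simpa using this
  · intro i j hij δ hδ hδ1
    refine hbound ((S i - 1) * (S j - 1)) δ (4^δ) hδ (fun r hr => ?_)
    have h1 := hg2 i j r hr hij
    have h2 : ‖(S i - 1) * (S j - 1) * exp (r • Λ Finset.univ)‖ ≤ 4 := by
      calc _ ≤ ‖(S i - 1)‖ * ‖(S j - 1)‖ * ‖exp (r • Λ Finset.univ)‖ := by
            refine (norm_mul_le _ _).trans ?_
            gcongr
            exact norm_mul_le _ _
        _ ≤ 2 * 2 * 1 := by
            have := hn2 i; have := hn2 j; have := hΛn Finset.univ r hr.le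
            gcongr
        _ = 4 := by norm_num
    set z := ‖(S i - 1) * (S j - 1) * exp (r • Λ Finset.univ)‖ with hz
    have hz0 : 0 ≤ z := norm_nonneg _
    calc z = z^δ * z^(1-δ) := by
          rw [← Real.rpow_add_of_nonneg hz0 hδ.le (by linarith)]; simp
      _ ≤ 4^δ * (1/r)^(1-δ) := by
          have : 0 ≤ 1 - δ := by linarith
          gcongr
      _ = 4^δ * r^(δ-1) := by
          rw [one_div, Real.inv_rpow hr.le, ← Real.rpow_neg hr.le]; congr 2; ring
end BA2

section RW
open scoped BoundedContinuousFunction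

/-- shift operator on bounded functions -/
def shiftOp {d k : ℕ} (v : Conf d k) : (Conf d k →ᵇ ℝ) →L[ℝ] (Conf d k →ᵇ ℝ) :=
  LinearMap.mkContinuous
    { toFun := fun f => f.compContinuous ⟨fun x => x + v, continuous_id.add continuous_const⟩
      map_add' := fun f g => rfl
      map_smul' := fun c f => rfl } 1 (by
        intro f
        rw [one_mul]
        refine (BoundedContinuousFunction.norm_le (norm_nonneg _)).2 fun x => ?_
        exact f.norm_coe_le_norm _)

lemma shiftOp_apply {d k : ℕ} (v : Conf d k) (f : Conf d k →ᵇ ℝ) (x : Conf d k) : shiftOp v f x = f (x + v) := rfl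

theorem rw_resolvent {d k : ℕ} (α M : ℝ) (hα : 0 < α) (hM : 0 ≤ M) (f : Conf d k → ℝ) (hf : ∀ x, |f x| ≤ M) :
    ∃ Ψ : Conf d k → ℝ, (∃ B, ∀ x, |Ψ x| ≤ B) ∧ (∀ x, α * Ψ x - LR Ψ x = f x) ∧
      (∀ (a : Fin k × Dir d) x, |Ψ (x + E a.1 (dv a.2)) - Ψ x| ≤ (1/α)^(1/2:ℝ) * Real.Gamma (1/2) * M) ∧
      (∀ (l l' : Fin k) (p : Dir d) x, l ≠ l' → ∀ δ : ℝ, 0 < δ → δ ≤ 1 →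
        |Ψ (x + E l' (dv p) + E l (dv p)) - Ψ (x + E l (dv p)) - Ψ (x + E l' (dv p)) + Ψ x| ≤ 4 ^ δ * ((1/α)^δ * Real.Gamma δ) * M) := by
  have : Nontrivial (Conf d k →ᵇ ℝ) := by
    refine ⟨⟨0, BoundedContinuousFunction.const _ 1, fun h => ?_⟩⟩
    have := congrArg (fun g : Conf d k →ᵇ ℝ => g 0) h
    simp at this
  let S : Fin k × Dir d → ((Conf d k →ᵇ ℝ) →L[ℝ] (Conf d k →ᵇ ℝ)) := fun a => shiftOp (E a.1 (dv a.2))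
  have hS : ∀ a, ‖S a‖ ≤ 1 := fun a => LinearMap.mkContinuous_norm_le _ zero_le_one _
  have hc : ∀ a b, Commute (S a) (S b) := by
    intro a b
    apply ContinuousLinearMap.ext
    intro g
    ext x
    show g (x + E a.1 (dv a.2) + E b.1 (dv b.2)) = g (x + E b.1 (dv b.2) + E a.1 (dv a.2))
    congr 1
    abel
  obtain ⟨G, h1, h2, h3⟩ := ba_resolvent S hS hc α hα
  let F : Conf d k →ᵇ ℝ := BoundedContinuousFunction.ofNormedAddCommGroupDiscrete f M hf
  have hF : ‖F‖ ≤ M := (BoundedContinuousFunction.norm_le hM).2 hf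
  have key : ∀ (A : (Conf d k →ᵇ ℝ) →L[ℝ] (Conf d k →ᵇ ℝ)) (c : ℝ), ‖A * G‖ ≤ c → ∀ x, |A (G F) x| ≤ c * M := by
    intro A c hA x
    have e := (A (G F)).norm_coe_le_norm x
    rw [Real.norm_eq_abs] at e
    refine e.trans ?_
    have e2 : A (G F) = (A * G) F := rfl
    rw [e2]
    refine ((A*G).le_opNorm F).trans ?_
    exact mul_le_mul hA hF (norm_nonneg _) (le_trans (norm_nonneg (A * G)) hA)
  refine ⟨fun x => G F x, ⟨‖G F‖, fun x => (G F).norm_coe_le_norm x⟩, ?_, ?_, ?_⟩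
  · intro x
    have e : ((α • (1 : (Conf d k →ᵇ ℝ) →L[ℝ] (Conf d k →ᵇ ℝ)) - ∑ j, (S j - 1)) * G) F x = f x := by
      rw [h1]; rfl
    rw [← e]
    rw [mul_apply_eq_comp, sub_apply, sum_apply,
      BoundedContinuousFunction.sub_apply, BoundedContinuousFunction.sum_apply]
    rfl
  · intro a x
    exact key (S a - 1) _ (h2 a) x
  · intro l l' p x hl δ hδ hδ1
    have := key ((S (l, p) - 1) * (S (l', p) - 1)) _ (h3 (l, p) (l', p) (by simp [hl]) δ hδ hδ1) x
    have e : ((S (l, p) - 1) * (S (l', p) - 1)) (G F) x =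
      ((G F) (x + E l (dv p) + E l' (dv p)) - (G F) (x + E l (dv p))) - ((G F) (x + E l' (dv p)) - (G F) x) := rfl
    rw [e] at this
    have e2 : x + E l' (dv p) + E l (dv p) = x + E l (dv p) + E l' (dv p) := by abel
    simp only [e2]
    convert this using 2
    ring
end RW

lemma StepSys.max_principle {X A : Type*} [Fintype A] (SS : StepSys X A) (v : X → ℝ) (B α : ℝ) (hα : 0 < α)
    (hB : ∀ x, -B ≤ v x) (h : ∀ x, 0 ≤ α * v x - SS.L v x) (x : X) : 0 ≤ v x := by
  by_contra hneg
  push Not at hneg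
  have hbdd : BddBelow (Set.range v) := ⟨-B, by rintro _ ⟨y, rfl⟩; exact hB y⟩
  have : Nonempty X := ⟨x⟩
  set m := ⨅ y, v y with hm
  have hmv : ∀ y, m ≤ v y := fun y => ciInf_le hbdd y
  have hm0 : m < 0 := (hmv x).trans_lt hneg
  set c : ℝ := ((Fintype.card A : ℕ) : ℝ) with hcdef
  have hc0 : 0 ≤ c := by positivity
  have hpos : 0 < α + c + 1 := by positivity
  set ε := -(α * m) / (2 * (α + c + 1)) with hε
  have hε0 : 0 < ε := by
    apply div_pos _ (by positivity)
    nlinarith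
  obtain ⟨y, hy⟩ := exists_lt_of_ciInf_lt (show (⨅ y, v y) < m + ε by linarith)
  have hL : -(c * ε) ≤ SS.L v y := by
    rw [SS.L_apply]
    have : ∑ _a : A, (-ε) ≤ ∑ a, SS.c a y * (v (SS.T a y) - v y) := by
      refine Finset.sum_le_sum fun a _ => ?_
      have h1 := SS.c_lo a y
      have h2 := SS.c_hi a y
      have h3 := hmv (SS.T a y)
      have h4 : -ε ≤ v (SS.T a y) - v y := by linarith
      nlinarith
    refine le_trans (le_of_eq ?_) this
    rw [Finset.sum_const, Finset.card_univ, nsmul_eq_mul]; ring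
  have h5 := h y
  have h6 : α * v y ≤ α * (m + ε) := by gcongr
  have h7 : ε * (2 * (α + c + 1)) = -(α * m) := by rw [hε]; field_simp
  nlinarith

/-- concave-type barrier profile -/
def gB (R : ℝ) (n : ℤ) : ℝ := R * (1 - (1 - 1/R)^n.natAbs)

lemma gB_zero (R : ℝ) : gB R 0 = 0 := by simp [gB]

lemma gB_one (R : ℝ) (hR : 1 ≤ R) (v : ℤ) (hv : v = 1 ∨ v = -1) : gB R v = 1 := by
  have : R ≠ 0 := by positivity
  rcases hv with rfl | rfl <;> simp [gB] <;> field_simp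

lemma gB_nonneg (R : ℝ) (hR : 1 ≤ R) (n : ℤ) : 0 ≤ gB R n := by
  have h1 : 1/R ≤ 1 := by rw [div_le_one (by linarith)]; exact hR
  have h2 : 0 < 1/R := by positivity
  have : (1 - 1/R)^n.natAbs ≤ 1 := pow_le_one₀ (by linarith) (by linarith)
  exact mul_nonneg (by linarith) (by linarith)

lemma gB_le (R : ℝ) (hR : 1 ≤ R) (n : ℤ) : gB R n ≤ R := by
  have h1 : 1/R ≤ 1 := by rw [div_le_one (by linarith)]; exact hR
  have : 0 ≤ (1 - 1/R)^n.natAbs := pow_nonneg (by linarith) _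
  unfold gB
  nlinarith

lemma gB_dd (R : ℝ) (hR : 1 ≤ R) (n v : ℤ) (hv : v = 1 ∨ v = -1) : -(1/R) ≤ gB R (n + v) + gB R (n - v) - 2 * gB R n := by
  have h1 : 1/R ≤ 1 := by rw [div_le_one (by linarith)]; exact hR
  have h2 : 0 < 1/R := by positivity
  have hsym : gB R (n + v) + gB R (n - v) = gB R (n+1) + gB R (n-1) := by
    rcases hv with rfl | rfl
    · rfl
    · rw [sub_neg_eq_add, ← sub_eq_add_neg, add_comm]
  rw [hsym]
  have key : ∀ m : ℕ, -(1/R) ≤ R * (1 - (1 - 1/R)^(m+2)) + R * (1 - (1 - 1/R)^m) - 2 * (R * (1 - (1 - 1/R)^(m+1))) := by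
    intro m
    have e : R * (1 - (1 - 1/R)^(m+2)) + R * (1 - (1 - 1/R)^m) - 2 * (R * (1 - (1 - 1/R)^(m+1))) = - ((1/R) * (1 - 1/R)^m) := by
      have : R * (1/R) = 1 := by field_simp
      rw [pow_add, pow_succ]
      linear_combination (-(1 - 1/R)^m*(1/R)) * this
    rw [e]
    have : (1 - 1/R)^m ≤ 1 := pow_le_one₀ (by linarith) (by linarith)
    nlinarith
  rcases lt_trichotomy n 0 with h | h | h
  · obtain ⟨m, hm⟩ : ∃ m : ℕ, n = -((m:ℤ) + 1) := ⟨(-n - 1).toNat, by omega⟩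
    have e1 : (n+1).natAbs = m := by omega
    have e2 : (n-1).natAbs = m+2 := by omega
    have e3 : n.natAbs = m+1 := by omega
    unfold gB
    rw [e1, e2, e3]
    have := key m; linarith
  · subst h
    have := gB_one R hR 1 (by simp)
    have := gB_one R hR (-1) (by simp)
    have := gB_zero R
    rw [zero_add, zero_sub]
    linarith
  · obtain ⟨m, hm⟩ : ∃ m : ℕ, n = (m:ℤ) + 1 := ⟨(n - 1).toNat, by omega⟩
    have e1 : (n+1).natAbs = m+2 := by omega
    have e2 : (n-1).natAbs = m := by omega
    have e3 : n.natAbs = m+1 := by omega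
    unfold gB
    rw [e1, e2, e3]
    have := key m; linarith

/-- barrier -/
def FB {d k : ℕ} (R : ℝ) (x : Conf d k) : ℝ := ∑ i : Fin k, ∑ j : Fin k, ∑ b : Fin d, gB R (x i b - x j b)

lemma dv_pm {d : ℕ} (p : Dir d) : dv p p.1 = 1 ∨ dv p p.1 = -1 := by
  obtain ⟨a, s⟩ := p
  cases s <;> simp [dv]

lemma dv_off {d : ℕ} (p : Dir d) (b : Fin d) (h : b ≠ p.1) : dv p b = 0 := by
  simp [dv, h]

lemma FB_nonneg {d k : ℕ} (R : ℝ) (hR : 1 ≤ R) (x : Conf d k) : 0 ≤ FB R x :=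
  Finset.sum_nonneg fun _ _ => Finset.sum_nonneg fun _ _ => Finset.sum_nonneg fun _ _ => gB_nonneg R hR _

lemma FB_le {d k : ℕ} (R : ℝ) (hR : 1 ≤ R) (x : Conf d k) : FB R x ≤ (k:ℝ)^2 * d * R := by
  calc FB R x ≤ ∑ i : Fin k, ∑ j : Fin k, ∑ b : Fin d, R :=
        Finset.sum_le_sum fun _ _ => Finset.sum_le_sum fun _ _ => Finset.sum_le_sum fun _ _ => gB_le R hR _
    _ = _ := by simp; ring

lemma FB_dd {d k : ℕ} (R : ℝ) (hR : 1 ≤ R) (x : Conf d k) (l : Fin k) (p : Dir d) :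
    -((k:ℝ)^2 * d * (1/R)) ≤ FB R (x + E l (dv p)) + FB R (x - E l (dv p)) - 2 * FB R x := by
  have e : FB R (x + E l (dv p)) + FB R (x - E l (dv p)) - 2 * FB R x =
    ∑ i : Fin k, ∑ j : Fin k, ∑ b : Fin d, (gB R ((x + E l (dv p)) i b - (x + E l (dv p)) j b) +
      gB R ((x - E l (dv p)) i b - (x - E l (dv p)) j b) - 2 * gB R (x i b - x j b)) := by
    simp only [FB, Finset.sum_add_distrib, Finset.sum_sub_distrib, Finset.mul_sum]
  rw [e]
  have h0 : -(1/R) ≤ 0 := by have : 0 < 1/R := by positivity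
                             linarith
  calc -((k:ℝ)^2 * d * (1/R)) = ∑ i : Fin k, ∑ j : Fin k, ∑ b : Fin d, (-(1/R)) := by simp; ring
    _ ≤ _ := Finset.sum_le_sum fun i _ => Finset.sum_le_sum fun j _ => Finset.sum_le_sum fun b _ => ?_
  simp only [Pi.add_apply, Pi.sub_apply, E_apply]
  by_cases hb : b = p.1
  · subst hb
    have hv := dv_pm p
    have hv' : - dv p p.1 = 1 ∨ - dv p p.1 = -1 := by omega
    by_cases hi : i = l <;> by_cases hj : j = l
    · simp only [hi, hj, if_true]
      refine h0.trans (le_of_eq ?_)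
      ring_nf
    · simp only [hi, hj, if_true, if_false, Pi.zero_apply]
      have q := gB_dd R hR (x l p.1 - x j p.1) (dv p p.1) hv
      rw [show x l p.1 + dv p p.1 - (x j p.1 + 0) = x l p.1 - x j p.1 + dv p p.1 by ring,
        show x l p.1 - dv p p.1 - (x j p.1 - 0) = x l p.1 - x j p.1 - dv p p.1 by ring]
      exact q
    · simp only [hi, hj, if_true, if_false, Pi.zero_apply]
      have q := gB_dd R hR (x i p.1 - x l p.1) (-dv p p.1) hv'
      rw [show x i p.1 + 0 - (x l p.1 + dv p p.1) = x i p.1 - x l p.1 + -dv p p.1 by ring,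
        show x i p.1 - 0 - (x l p.1 - dv p p.1) = x i p.1 - x l p.1 - -dv p p.1 by ring]
      exact q
    · simp only [hi, hj, if_false, Pi.zero_apply]
      refine h0.trans (le_of_eq ?_)
      ring_nf
  · have hz : ∀ i, (if i = l then dv p else 0) b = 0 := by
      intro i; split_ifs <;> simp [dv_off p b hb]
    simp only [hz]
    refine h0.trans (le_of_eq ?_)
    ring_nf

lemma E_dneg {d k : ℕ} (l : Fin k) (p : Dir d) : E l (dv (dneg p)) = - E l (dv p) := by
  rw [dv_dneg]; funext j; simp only [E_apply, Pi.neg_apply]; split_ifs <;> simp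

lemma LR_sym {d k : ℕ} (f : Conf d k → ℝ) (x : Conf d k) :
    LR f x = (1/2) * ∑ a : Fin k × Dir d, (f (x + E a.1 (dv a.2)) + f (x - E a.1 (dv a.2)) - 2 * f x) := by
  have h : LR f x = ∑ a : Fin k × Dir d, (f (x - E a.1 (dv a.2)) - f x) := by
    let e : (Fin k × Dir d) ≃ (Fin k × Dir d) := ⟨fun a => (a.1, dneg a.2), fun a => (a.1, dneg a.2),
      fun a => by simp [dneg_dneg], fun a => by simp [dneg_dneg]⟩
    unfold LR
    rw [← Equiv.sum_comp e]
    refine Finset.sum_congr rfl fun a _ => ?_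
    show f (x + E a.1 (dv (dneg a.2))) - f x = _
    rw [E_dneg, ← sub_eq_add_neg]
  have h2 : LR f x + LR f x = ∑ a : Fin k × Dir d, (f (x + E a.1 (dv a.2)) + f (x - E a.1 (dv a.2)) - 2 * f x) := by
    nth_rewrite 2 [h]
    unfold LR
    rw [← Finset.sum_add_distrib]
    exact Finset.sum_congr rfl fun a _ => by ring
  linarith

lemma LR_FB {d k : ℕ} (R : ℝ) (hR : 1 ≤ R) (x : Conf d k) :
    -((k:ℝ) * d * (k^2 * d) * (1/R)) ≤ LR (FB R) x := by
  rw [LR_sym]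
  have : ∑ _a : Fin k × Dir d, (-((k:ℝ)^2 * d * (1/R))) ≤ ∑ a : Fin k × Dir d, (FB R (x + E a.1 (dv a.2)) + FB R (x - E a.1 (dv a.2)) - 2 * FB R x) :=
    Finset.sum_le_sum fun a _ => FB_dd R hR x a.1 a.2
  refine le_trans (le_of_eq ?_) (mul_le_mul_of_nonneg_left this (by norm_num))
  simp
  ring

lemma FB_bracket {d k : ℕ} (R : ℝ) (hR : 1 ≤ R) (x : Conf d k) (l l' : Fin k) (p : Dir d)
    (h : x l + dv p = x l') :
    2 ≤ FB R (x + E l (dv p) - E l' (dv p)) + FB R x - FB R (x + E l (dv p)) - FB R (x - E l' (dv p)) := by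
  have hne : l ≠ l' := by rintro rfl; exact dv_ne_zero p (by simpa using h)
  set t : Fin k → Fin k → Fin d → ℝ := fun i j b =>
    gB R ((x + E l (dv p) - E l' (dv p)) i b - (x + E l (dv p) - E l' (dv p)) j b) + gB R (x i b - x j b)
    - gB R ((x + E l (dv p)) i b - (x + E l (dv p)) j b) - gB R ((x - E l' (dv p)) i b - (x - E l' (dv p)) j b) with ht
  have e : FB R (x + E l (dv p) - E l' (dv p)) + FB R x - FB R (x + E l (dv p)) - FB R (x - E l' (dv p)) =
    ∑ i : Fin k, ∑ j : Fin k, ∑ b : Fin d, t i j b := by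
    simp only [FB, ht, Finset.sum_add_distrib, Finset.sum_sub_distrib]
  rw [e]
  have hv := dv_pm p
  have hb' : x l p.1 + dv p p.1 = x l' p.1 := congrFun h p.1
  have g0 := gB_zero R
  have g1 := gB_one R hR _ hv
  have g2 := gB_one R hR (- dv p p.1) (by omega)
  have h2 : t l l' p.1 = 2 := by
    simp only [ht, Pi.add_apply, Pi.sub_apply, E_apply, hne, hne.symm, if_true, if_false, Pi.zero_apply]
    rw [show x l p.1 + dv p p.1 - 0 - (x l' p.1 + 0 - dv p p.1) = dv p p.1 by omega,
      show x l p.1 - x l' p.1 = - dv p p.1 by omega,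
      show x l p.1 + dv p p.1 - (x l' p.1 + 0) = 0 by omega,
      show x l p.1 - 0 - (x l' p.1 - dv p p.1) = 0 by omega]
    linarith
  have hnn : ∀ i j b, 0 ≤ t i j b := by
    intro i j b
    by_cases hb : b = p.1
    · subst hb
      by_cases hi : i = l
      · by_cases hj : j = l'
        · rw [hi, hj, h2]; norm_num
        · apply le_of_eq
          subst hi
          by_cases hj2 : j = i
          · simp only [ht, Pi.add_apply, Pi.sub_apply, E_apply, hj2]; ring_nf
          · simp only [ht, Pi.add_apply, Pi.sub_apply, E_apply, hj, hj2, hne, if_true, if_false, Pi.zero_apply]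
            ring_nf
      · by_cases hi' : i = l'
        · by_cases hj : j = l
          · subst hi'; subst hj
            simp only [ht, Pi.add_apply, Pi.sub_apply, E_apply, hne, hne.symm, if_true, if_false, Pi.zero_apply]
            rw [show x i p.1 + 0 - dv p p.1 - (x j p.1 + dv p p.1 - 0) = - dv p p.1 by omega,
              show x i p.1 - x j p.1 = dv p p.1 by omega,
              show x i p.1 + 0 - (x j p.1 + dv p p.1) = 0 by omega,
              show x i p.1 - dv p p.1 - (x j p.1 - 0) = 0 by omega]
            linarith
          · apply le_of_eq
            subst hi'
            by_cases hj2 : j = i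
            · simp only [ht, Pi.add_apply, Pi.sub_apply, E_apply, hj2]; ring_nf
            · simp only [ht, Pi.add_apply, Pi.sub_apply, E_apply, hj, hj2, hne.symm, if_true, if_false, Pi.zero_apply]
              ring_nf
        · apply le_of_eq
          by_cases hj : j = l
          · subst hj
            simp only [ht, Pi.add_apply, Pi.sub_apply, E_apply, hi, hi', hne, if_true, if_false, Pi.zero_apply]
            ring_nf
          · simp only [ht, Pi.add_apply, Pi.sub_apply, E_apply, hi, hi', hj, if_false, Pi.zero_apply]
            ring_nf
    · have hz : ∀ (i m : Fin k), (E m (dv p) : Conf d k) i b = 0 := by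
        intro i m; rw [E_apply]; split_ifs <;> simp [dv_off p b hb]
      apply le_of_eq
      simp only [ht, Pi.add_apply, Pi.sub_apply, hz]
      ring_nf
  calc (2:ℝ) = t l l' p.1 := h2.symm
    _ ≤ ∑ b, t l l' b := Finset.single_le_sum (f := fun b => t l l' b) (fun b _ => hnn l l' b) (Finset.mem_univ _)
    _ ≤ ∑ j, ∑ b, t l j b := Finset.single_le_sum (f := fun j => ∑ b, t l j b) (fun j _ => Finset.sum_nonneg fun b _ => hnn l j b) (Finset.mem_univ _)
    _ ≤ ∑ i, ∑ j, ∑ b, t i j b := Finset.single_le_sum (f := fun i => ∑ j, ∑ b, t i j b)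
        (fun i _ => Finset.sum_nonneg fun j _ => Finset.sum_nonneg fun b _ => hnn i j b) (Finset.mem_univ _)

lemma L_FB {d k : ℕ} (R : ℝ) (hR : 1 ≤ R) (x : XS d k) :
    NN x.1 - (k:ℝ) * d * (k^2 * d) * (1/R) ≤ (SX d k).L (fun z => FB R z.1) x := by
  rw [V_formula]
  have h1 := LR_FB R hR x.1
  have h2 : NN x.1 ≤ (1/2) * ∑ a : Fin k × Dir d, ∑ l',
      if x.1 a.1 + dv a.2 = x.1 l' then
        (FB R (x.1 + E a.1 (dv a.2) - E l' (dv a.2)) + FB R x.1 - FB R (x.1 + E a.1 (dv a.2)) - FB R (x.1 - E l' (dv a.2))) else 0 := by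
    unfold NN
    simp only [Finset.mul_sum]
    refine Finset.sum_le_sum fun a _ => Finset.sum_le_sum fun l' _ => ?_
    split_ifs with h
    · have := FB_bracket R hR x.1 a.1 l' a.2 h
      linarith
    · simp
  linarith

lemma V_bound {d k : ℕ} (Ψ : Conf d k → ℝ) (D : ℝ)
    (hD : ∀ (l l' : Fin k) (p : Dir d) (x : Conf d k), l ≠ l' →
      |Ψ (x + E l' (dv p) + E l (dv p)) - Ψ (x + E l (dv p)) - Ψ (x + E l' (dv p)) + Ψ x| ≤ D) (x : XS d k) :
    |(SX d k).L (fun z => Ψ z.1) x - LR Ψ x.1| ≤ D / 2 * NN x.1 := by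
  rw [V_formula, add_sub_cancel_left, abs_mul, abs_of_pos (by norm_num : (0:ℝ) < 1/2)]
  have : |∑ a : Fin k × Dir d, ∑ l',
      if x.1 a.1 + dv a.2 = x.1 l' then
        (Ψ (x.1 + E a.1 (dv a.2) - E l' (dv a.2)) + Ψ x.1 - Ψ (x.1 + E a.1 (dv a.2)) - Ψ (x.1 - E l' (dv a.2))) else 0|
      ≤ D * NN x.1 := by
    unfold NN
    simp only [Finset.mul_sum]
    refine (Finset.abs_sum_le_sum_abs _ _).trans (Finset.sum_le_sum fun a _ => ?_)
    refine (Finset.abs_sum_le_sum_abs _ _).trans (Finset.sum_le_sum fun l' _ => ?_)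
    split_ifs with h
    · have hne : a.1 ≠ l' := by
        intro e; rw [← e] at h; exact dv_ne_zero a.2 (by simpa using h)
      have q := hD a.1 l' a.2 (x.1 - E l' (dv a.2)) hne
      rw [sub_add_cancel, show x.1 - E l' (dv a.2) + E a.1 (dv a.2) = x.1 + E a.1 (dv a.2) - E l' (dv a.2) by abel] at q
      rw [mul_one, abs_le]
      rw [abs_le] at q
      constructor <;> linarith [q.1, q.2]
    · simp
  linarith

lemma elliptic (d k : ℕ) (δ : ℝ) (hδ : 0 < δ) (hδ1 : δ ≤ 1) :
    ∃ C : ℝ, 0 ≤ C ∧ ∀ (α M : ℝ), 0 < α → α ≤ 1 → 0 ≤ M → ∀ u : XS d k → ℝ, (∀ x, |u x| ≤ M) →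
      (∀ x, |(SX d k).L u x| ≤ α * M) → ∀ (a : Fin k × Dir d) (x x' : XS d k), x'.1 = x.1 + E a.1 (dv a.2) →
      |u x' - u x| ≤ C * ((1/α)^(1/2:ℝ) * (1/α)^δ * (α * M)) := by
  set C3 : ℝ := (k:ℝ) * d * (k^2 * d) with hC3
  have hC30 : 0 ≤ C3 := by positivity
  have hG : 0 < Real.Gamma δ := Real.Gamma_pos_of_pos hδ
  have hG2 : 0 < Real.Gamma (1/2) := Real.Gamma_pos_of_pos (by norm_num)
  have h4 : (0:ℝ) < 4^δ := Real.rpow_pos_of_pos (by norm_num) _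
  refine ⟨2 * Real.Gamma (1/2) + 2 * 4^δ * Real.Gamma δ * ((k:ℝ)^2 * d + C3), by positivity, ?_⟩
  intro α M hα hα1 hM u hu hLu a x x' hx'
  set f : Conf d k → ℝ := fun z => if h : z ∈ SSet d k then α * u ⟨z, h⟩ - (SX d k).L u ⟨z, h⟩ else 0 with hf
  have hfb : ∀ z, |f z| ≤ 2 * α * M := by
    intro z
    simp only [hf]
    split_ifs with h
    · refine (abs_sub _ _).trans ?_
      rw [abs_mul, abs_of_pos hα]
      have := hu ⟨z, h⟩
      have := hLu ⟨z, h⟩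
      nlinarith
    · simp; positivity
  obtain ⟨Ψ, ⟨B, hB⟩, hΨ, hg, hgg⟩ := rw_resolvent α (2 * α * M) hα (by positivity) f hfb
  have hs1 : 1 ≤ 1/α := by rw [le_div_iff₀ hα]; linarith
  set R : ℝ := (1/α)^(1/2:ℝ) with hR
  have hR1 : 1 ≤ R := Real.one_le_rpow hs1 (by norm_num)
  have hS1 : 1 ≤ (1/α)^δ := Real.one_le_rpow hs1 hδ.le
  set S : ℝ := (1/α)^δ with hS
  have hRR : R * R * α = 1 := by
    rw [hR, ← Real.rpow_add (by positivity)]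
    norm_num
    field_simp
  set D : ℝ := 4^δ * (S * Real.Gamma δ) * (2 * α * M) with hD
  have hD0 : 0 ≤ D := by positivity
  have hV := V_bound Ψ D (fun l l' p x hne => hgg l l' p x hne δ hδ hδ1)
  set w : XS d k → ℝ := fun z => u z - Ψ z.1 with hw
  have hwL : ∀ z, |α * w z - (SX d k).L w z| ≤ D / 2 * NN z.1 := by
    intro z
    have e1 : w = u - (fun z : XS d k => Ψ z.1) := rfl
    have e2 : (SX d k).L w z = (SX d k).L u z - (SX d k).L (fun z : XS d k => Ψ z.1) z := by
      rw [e1, map_sub]; rfl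
    have e3 := hΨ z.1
    have e4 : f z.1 = α * u z - (SX d k).L u z := by simp only [hf]; rw [dif_pos z.2]
    have := hV z
    rw [e2, hw]
    convert this using 2
    rw [e4] at e3
    simp only
    linarith
  set κ : ℝ := ((k:ℝ)^2 * d + C3) * R with hκ
  set H : XS d k → ℝ := fun z => D / 2 * (κ - FB R z.1) with hH
  have hHL : ∀ z, D / 2 * NN z.1 ≤ α * H z - (SX d k).L H z := by
    intro z
    have e1 : (SX d k).L H z = - (D / 2) * (SX d k).L (fun z => FB R z.1) z := by
      simp only [StepSys.L_apply, hH, Finset.mul_sum]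
      exact Finset.sum_congr rfl fun a _ => by ring
    rw [e1]
    simp only [hH]
    have h1 := L_FB R hR1 z
    have h2 := FB_le R hR1 z.1
    have h3 : α * κ = α * ((k:ℝ)^2 * d * R) + C3 * (1/R) := by
      have : α * R = 1/R := by
        rw [eq_div_iff (by positivity)]; linarith
      rw [hκ, ← this]; ring
    have h5 : α * FB R z.1 ≤ α * ((k:ℝ)^2 * d * R) := by gcongr
    have h4 : NN z.1 ≤ α * (κ - FB R z.1) + (SX d k).L (fun z => FB R z.1) z := by
      rw [mul_sub, h3]; linarith
    have := mul_le_mul_of_nonneg_left h4 (show 0 ≤ D / 2 by positivity)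
    linarith
  have hH0 : ∀ z, 0 ≤ H z := by
    intro z
    have h2 := FB_le R hR1 z.1
    have : 0 ≤ C3 * R := by positivity
    refine mul_nonneg (by positivity) ?_
    rw [hκ]; linarith
  have hHle : ∀ z, H z ≤ D / 2 * κ := by
    intro z
    have := FB_nonneg R hR1 z.1
    exact mul_le_mul_of_nonneg_left (by linarith) (by positivity)
  have hwb : ∀ z, |w z| ≤ M + B := by
    intro z
    exact (abs_sub _ _).trans (add_le_add (hu z) (hB z.1))
  have hwz : ∀ z, |w z| ≤ D / 2 * κ := by
    intro z
    have p1 := (SX d k).max_principle (H - w) (M + B) α hα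
      (fun y => by have := hwb y; have := hH0 y; rw [abs_le] at *; simp only [Pi.sub_apply]; linarith)
      (fun y => by
        have q1 := hwL y; have q2 := hHL y
        rw [abs_le] at q1
        rw [map_sub]; simp only [Pi.sub_apply]; linarith [q1.1, q1.2]) z
    have p2 := (SX d k).max_principle (H + w) (M + B) α hα
      (fun y => by have := hwb y; have := hH0 y; rw [abs_le] at *; simp only [Pi.add_apply]; linarith)
      (fun y => by
        have q1 := hwL y; have q2 := hHL y
        rw [abs_le] at q1
        rw [map_add]; simp only [Pi.add_apply]; linarith [q1.1, q1.2]) z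
    simp only [Pi.sub_apply, Pi.add_apply] at p1 p2
    have := hHle z
    rw [abs_le]; constructor <;> linarith
  have t1 := hg a x.1
  have t2 := hwz x
  have t3 := hwz x'
  have e : u x' - u x = (Ψ (x.1 + E a.1 (dv a.2)) - Ψ x.1) + (w x' - w x) := by
    simp only [hw, hx']; ring
  have t4 : |u x' - u x| ≤ R * Real.Gamma (1/2) * (2 * α * M) + D * κ := by
    rw [e]
    refine (abs_add_le _ _).trans ?_
    have := abs_sub (w x') (w x)
    linarith
  refine t4.trans ?_
  have t5 : R * Real.Gamma (1/2) * (2 * α * M) * 1 ≤ R * Real.Gamma (1/2) * (2 * α * M) * S := by gcongr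
  rw [hD, hκ]
  linarith

lemma fact_bd (n M : ℕ) : (n + M).factorial ≤ M.factorial * (n.factorial * (n+1)^M) := by
  induction M with
  | zero => simp
  | succ M ih =>
    rw [← add_assoc, Nat.factorial_succ, Nat.factorial_succ, pow_succ]
    calc (n + M + 1) * (n+M).factorial ≤ ((M+1) * (n+1)) * (M.factorial * (n.factorial * (n+1)^M)) :=
          Nat.mul_le_mul (by nlinarith) ih
      _ = _ := by ring

lemma poisson_bd (p : ℝ) (hp : 0 ≤ p) : ∃ C : ℝ, 0 < C ∧ ∀ s : ℝ, 0 ≤ s →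
    Summable (fun n : ℕ => s^n / n.factorial * ((n:ℝ)+1)^(-p)) ∧
    ∑' n : ℕ, s^n / n.factorial * ((n:ℝ)+1)^(-p) ≤ C * Real.exp s * (s+1)^(-p) := by
  obtain ⟨M, hM⟩ := exists_nat_ge p
  refine ⟨1 + 2^M * M.factorial + 2^p, by positivity, ?_⟩
  intro s hs
  have hexp := real_hasSum s
  have hle1 : ∀ n : ℕ, ((n:ℝ)+1)^(-p) ≤ 1 := fun n =>
    Real.rpow_le_one_of_one_le_of_nonpos (by linarith [(Nat.cast_nonneg n : (0:ℝ) ≤ n)]) (by linarith)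
  have hsum : Summable (fun n : ℕ => s^n / n.factorial * ((n:ℝ)+1)^(-p)) := by
    refine Summable.of_nonneg_of_le (fun n => by positivity) (fun n => ?_) hexp.summable
    exact mul_le_of_le_one_right (by positivity) (hle1 n)
  refine ⟨hsum, ?_⟩
  have hs1 : 0 < s + 1 := by linarith
  have key : (∑' n : ℕ, s^n / n.factorial * ((n:ℝ)+1)^(-p)) * (s+1)^p ≤ (1 + 2^M * M.factorial + 2^p) * Real.exp s := by
    rcases le_total s 1 with h | h
    · have h1 : ∑' n : ℕ, s^n / n.factorial * ((n:ℝ)+1)^(-p) ≤ Real.exp s := by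
        rw [← hexp.tsum_eq]
        exact hsum.tsum_le_tsum (fun n => mul_le_of_le_one_right (by positivity) (hle1 n)) hexp.summable
      have h2 : (s+1)^p ≤ 2^p := Real.rpow_le_rpow hs1.le (by linarith) hp
      calc _ ≤ Real.exp s * 2^p := by gcongr
        _ ≤ _ := by
          have : 0 < (2:ℝ)^M * M.factorial := by positivity
          nlinarith [Real.exp_pos s]
    · rw [← tsum_mul_right]
      have hsh : Summable (fun n : ℕ => s^(n+M) / (n+M).factorial) := (summable_nat_add_iff M).2 hexp.summable
      have hshle : ∑' n : ℕ, s^(n+M) / (n+M).factorial ≤ Real.exp s := by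
        rw [← hexp.tsum_eq, ← hexp.summable.sum_add_tsum_nat_add M]
        have : 0 ≤ ∑ i ∈ Finset.range M, s^i / i.factorial := Finset.sum_nonneg fun i _ => by positivity
        linarith
      have hterm : ∀ n : ℕ, s^n / n.factorial * ((n:ℝ)+1)^(-p) * (s+1)^p ≤
          s^n / n.factorial + 2^M * M.factorial * (s^(n+M) / (n+M).factorial) := by
        intro n
        have hn : (0:ℝ) < (n:ℝ)+1 := by positivity
        set r := (s+1)/((n:ℝ)+1) with hr
        have hr0 : 0 < r := by positivity
        have e : ((n:ℝ)+1)^(-p) * (s+1)^p = r^p := by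
          rw [hr, Real.div_rpow hs1.le hn.le, Real.rpow_neg hn.le]; field_simp
        have h1 : r^p ≤ 1 + r^M := by
          rcases le_total r 1 with h | h
          · have := Real.rpow_le_one hr0.le h hp
            have : 0 < r^M := by positivity
            linarith
          · have := Real.rpow_le_rpow_of_exponent_le h hM
            rw [Real.rpow_natCast] at this
            linarith
        have h2 : r^M ≤ 2^M * (s^M / ((n:ℝ)+1)^M) := by
          rw [← div_pow, ← mul_pow]
          gcongr
          rw [hr, ← mul_div_assoc]
          gcongr
          linarith
        have h3 : (1:ℝ) / (n.factorial * ((n:ℝ)+1)^M) ≤ M.factorial / (n+M).factorial := by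
          rw [div_le_div_iff₀ (by positivity) (by positivity), one_mul]
          exact_mod_cast fact_bd n M
        rw [mul_assoc, e]
        calc s^n / n.factorial * r^p ≤ s^n / n.factorial * (1 + 2^M * (s^M / ((n:ℝ)+1)^M)) := by
              gcongr; linarith
          _ = s^n / n.factorial + 2^M * s^(n+M) * (1 / (n.factorial * ((n:ℝ)+1)^M)) := by
              rw [pow_add]; field_simp
          _ ≤ s^n / n.factorial + 2^M * s^(n+M) * (M.factorial / (n+M).factorial) := by gcongr
          _ = _ := by ring
      calc _ ≤ ∑' n : ℕ, (s^n / n.factorial + 2^M * M.factorial * (s^(n+M) / (n+M).factorial)) :=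
            (hsum.mul_right _).tsum_le_tsum hterm (hexp.summable.add (hsh.mul_left _))
        _ = Real.exp s + 2^M * M.factorial * ∑' n : ℕ, s^(n+M) / (n+M).factorial := by
            rw [hexp.summable.tsum_add (hsh.mul_left _), hexp.tsum_eq, tsum_mul_left]
        _ ≤ Real.exp s + 2^M * M.factorial * Real.exp s := by gcongr
        _ ≤ _ := by
          have : 0 < (2:ℝ)^p * Real.exp s := by positivity
          linarith
  rw [Real.rpow_neg hs1.le, ← div_eq_mul_inv, le_div_iff₀ (by positivity)]
  exact key

lemma Lpow_expand {X A : Type*} [Fintype A] [Nonempty A] (SS : StepSys X A) (u : X → ℝ) (x : X) (t : ℝ) (n : ℕ) :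
    t^n / n.factorial * (SS.L ^ n) u x =
    ∑ kl ∈ Finset.HasAntidiagonal.antidiagonal n, ((SS.lam * t)^kl.1 / kl.1.factorial * (SS.K ^ kl.1) u x) *
      ((-(SS.lam * t))^kl.2 / kl.2.factorial) := by
  have hl : SS.lam ≠ 0 := SS.lam_pos.ne'
  have e : SS.L = SS.lam • (SS.K + (-1 : Module.End ℝ (X → ℝ))) := by
    rw [StepSys.K, add_comm (1 : Module.End ℝ (X → ℝ)), add_neg_cancel_right, smul_smul, mul_inv_cancel₀ hl, one_smul]
  have hc : Commute SS.K (-1 : Module.End ℝ (X → ℝ)) := by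
    refine LinearMap.ext fun v => ?_
    show SS.K (-v) = - SS.K v
    exact map_neg _ _
  rw [e, smul_pow, hc.add_pow', LinearMap.smul_apply, LinearMap.sum_apply, Pi.smul_apply, Finset.sum_apply, smul_eq_mul,
    ← mul_assoc, Finset.mul_sum]
  refine Finset.sum_congr rfl fun kl hkl => ?_
  rw [Finset.HasAntidiagonal.mem_antidiagonal] at hkl
  subst hkl
  obtain ⟨i, j⟩ := kl
  have e2 : ((-1 : Module.End ℝ (X → ℝ))^j) = ((-1:ℝ)^j) • (1 : Module.End ℝ (X → ℝ)) := by
    rw [← one_pow (M := Module.End ℝ (X → ℝ)) j, ← smul_pow]; simp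
  have e3 : ((((i+j).choose i) • (SS.K^i * (-1 : Module.End ℝ (X → ℝ))^j)) u) x =
      ((i+j).choose i : ℝ) * ((-1)^j * (SS.K^i) u x) := by
    rw [e2, mul_smul_comm, mul_one, ← Nat.cast_smul_eq_nsmul ℝ]; rfl
  simp only
  rw [e3]
  have h4 : (((i+j).factorial : ℕ):ℝ) = (i+j).choose i * i.factorial * j.factorial := by
    have := Nat.choose_mul_factorial_mul_factorial (Nat.le_add_right i j)
    rw [Nat.add_sub_cancel_left] at this
    rw [← this]; push_cast; ring
  have h5 : ((i+j).choose i : ℝ) ≠ 0 := by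
    have := Nat.choose_pos (Nat.le_add_right i j)
    positivity
  rw [h4, pow_add, pow_add, mul_pow, neg_pow (SS.lam * t), mul_pow]
  field_simp

lemma ptl_expand {d k : ℕ} [Nonempty (Fin k × Dir d)] (B : ℝ) (t : ℝ) (x y : XS d k)
    (hB : ∀ n, |((SX d k).K^n) (deltaFn y) x| ≤ B) :
    Summable (fun n : ℕ => ((SX d k).lam * t)^n / n.factorial * ((SX d k).K ^ n) (deltaFn y) x) ∧
    ptl t x.1 y.1 = (∑' n : ℕ, ((SX d k).lam * t)^n / n.factorial * ((SX d k).K ^ n) (deltaFn y) x) *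
      Real.exp (-((SX d k).lam * t)) := by
  have hs : ∀ r : ℝ, Summable (fun n : ℕ => ‖r^n / n.factorial‖) := by
    intro r
    have := (real_hasSum |r|).summable
    refine this.congr fun n => ?_
    rw [Real.norm_eq_abs, abs_div, abs_pow, Nat.abs_cast]
  have hs2 : Summable (fun n : ℕ => ‖((SX d k).lam * t)^n / n.factorial * ((SX d k).K ^ n) (deltaFn y) x‖) := by
    refine Summable.of_nonneg_of_le (fun n => norm_nonneg _) (fun n => ?_) ((hs ((SX d k).lam * t)).mul_right B)
    rw [norm_mul]
    exact mul_le_mul_of_nonneg_left (hB n) (norm_nonneg _)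
  refine ⟨hs2.of_norm, ?_⟩
  rw [← (real_hasSum (-((SX d k).lam * t))).tsum_eq, tsum_mul_tsum_eq_tsum_sum_antidiagonal_of_summable_norm hs2 (hs _)]
  unfold ptl
  refine tsum_congr fun n => ?_
  rw [← Lpow_expand, Lexc_iter]
  have hδ : (fun z : XS d k => deltaFn y.1 z.1) = deltaFn y := by
    funext z
    unfold deltaFn
    by_cases h : z = y
    · rw [if_pos h, if_pos (congrArg Subtype.val h)]
    · rw [if_neg h, if_neg fun h' => h (Subtype.ext h')]
  rw [hδ]

lemma grad_K (d k : ℕ) (hd : 1 ≤ d) (hk : 1 ≤ k) (θ : ℝ) (hθ : θ ∈ Set.Ioo (0 : ℝ) 1) :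
    ∃ B C : ℝ, 0 ≤ C ∧ ∀ (n : ℕ) (y x x' : XS d k) (a : Fin k × Dir d), x'.1 = x.1 + E a.1 (dv a.2) →
      |((SX d k).K^n) (deltaFn y) x| ≤ B ∧
      |((SX d k).K^n) (deltaFn y) x' - ((SX d k).K^n) (deltaFn y) x| ≤ C * ((n:ℝ)+1)^(-((((k*d:ℕ):ℝ) + θ)/2)) := by
  have : Nonempty (Fin k × Dir d) := ⟨(⟨0, hk⟩, (⟨0, hd⟩, true))⟩
  obtain ⟨C1, hC1, h1⟩ := (SX d k).kernel_bounds (by positivity) (SX_nash d k)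
  obtain ⟨C2, hC2, h2⟩ := elliptic d k ((1-θ)/2) (by linarith [hθ.2]) (by linarith [hθ.1])
  refine ⟨C1, C2 * C1, by positivity, ?_⟩
  intro n y x x' a hx'
  have hcard : Fintype.card (Fin k × Fin d) = k * d := by simp
  rw [hcard] at h1
  set N : ℝ := (n:ℝ) + 1 with hN
  have hN1 : 1 ≤ N := by rw [hN]; linarith [(Nat.cast_nonneg n : (0:ℝ) ≤ n)]
  have hN0 : 0 < N := by linarith
  constructor
  · refine (h1 n x y).1.trans (div_le_self hC1.le ?_)
    exact one_le_pow₀ (Real.one_le_sqrt.2 hN1)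
  · have := h2 (1/N) (C1 / (√N)^(k*d)) (by positivity) (by rw [div_le_one hN0]; exact hN1) (by positivity)
      (((SX d k).K^n) (deltaFn y)) (fun z => (h1 n z y).1) (fun z => ?_) a x x' hx'
    · refine this.trans (le_of_eq ?_)
      rw [one_div_one_div, mul_assoc C2 C1]
      congr 1
      have e1 : (√N)^(k*d) = N^(((k*d:ℕ):ℝ)/2) := by
        rw [Real.sqrt_eq_rpow, ← Real.rpow_natCast, ← Real.rpow_mul hN0.le]; congr 1; ring
      have e2 : 1/N = N^(-1:ℝ) := by rw [Real.rpow_neg_one, one_div]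
      rw [e1, e2, div_eq_mul_inv C1, ← Real.rpow_neg hN0.le]
      have e3 : N^(1/2:ℝ) * N^((1-θ)/2) * (N^(-1:ℝ) * (C1 * N^(-(((k*d:ℕ):ℝ)/2)))) =
        C1 * (N^(1/2:ℝ) * N^((1-θ)/2) * N^(-1:ℝ) * N^(-(((k*d:ℕ):ℝ)/2))) := by ring
      rw [e3, ← Real.rpow_add hN0, ← Real.rpow_add hN0, ← Real.rpow_add hN0]
      congr 2
      ring
    · refine (h1 n z y).2.trans (le_of_eq ?_)
      rw [← hN]
      field_simp

lemma e11_eq (d k : ℕ) (hd : 1 ≤ d) (hk : 1 ≤ k) :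
    e11 d k = E (⟨0, hk⟩ : Fin k) (dv ((⟨0, hd⟩ : Fin d), true)) := by
  funext i j
  rw [E_apply]
  simp only [e11, dv, Fin.ext_iff]
  by_cases h1 : i.val = 0 <;> by_cases h2 : j.val = 0 <;> simp [h1, h2, Pi.single_apply, Fin.ext_iff]

/-- Theorem (spatially uniform gradient bound): for integers `d, k ≥ 1` and `θ ∈ (0,1)` there is
a constant `C = C(θ,k,d)` such that for all `x, y ∈ 𝕊^k` with `x + e₁₁ ∈ 𝕊^k` and all `t ≥ 0`,
`|p_t^ℓ(x,y) − p_t^ℓ(x+e₁₁,y)| ≤ C (√t + 1)^{−(kd+θ)}`. -/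
theorem uniform_gradient_bound (d k : ℕ) (hd : 1 ≤ d) (hk : 1 ≤ k)
    (θ : ℝ) (hθ : θ ∈ Set.Ioo (0 : ℝ) 1) :
    ∃ C : ℝ, 0 < C ∧ ∀ x y : Conf d k, x ∈ SSet d k → y ∈ SSet d k →
      x + e11 d k ∈ SSet d k → ∀ t : ℝ, 0 ≤ t →
      |ptl t x y - ptl t (x + e11 d k) y| ≤
        C * (Real.sqrt t + 1) ^ (-(((k * d : ℕ) : ℝ) + θ)) := by
  have : Nonempty (Fin k × Dir d) := ⟨(⟨0, hk⟩, (⟨0, hd⟩, true))⟩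
  obtain ⟨B, C1, hC1, hg⟩ := grad_K d k hd hk θ hθ
  set p : ℝ := (((k*d:ℕ):ℝ) + θ)/2 with hp
  have hp0 : 0 ≤ p := by have := hθ.1; positivity
  obtain ⟨C2, hC2, hP⟩ := poisson_bd p hp0
  refine ⟨C1 * C2 * 2^p + 1, by positivity, ?_⟩
  intro x y hx hy hx' t ht
  set X : XS d k := ⟨x, hx⟩ with hX
  set X' : XS d k := ⟨x + e11 d k, hx'⟩ with hX'
  set Y : XS d k := ⟨y, hy⟩ with hY
  set a : Fin k × Dir d := (⟨0, hk⟩, (⟨0, hd⟩, true)) with ha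
  have hXX : X'.1 = X.1 + E a.1 (dv a.2) := by
    show x + e11 d k = _
    rw [e11_eq d k hd hk]
  have hXX2 : X.1 = X'.1 + E a.1 (dv (dneg a.2)) := by
    rw [hXX, E_dneg]; abel
  have hl1 : 1 ≤ (SX d k).lam := by
    have : 1 ≤ Fintype.card (Fin k × Dir d) := Fintype.card_pos
    have : (1:ℝ) ≤ (Fintype.card (Fin k × Dir d) : ℕ) := by exact_mod_cast this
    unfold StepSys.lam; linarith
  set s : ℝ := (SX d k).lam * t with hs
  have hst : t ≤ s := by rw [hs]; nlinarith
  have hs0 : 0 ≤ s := ht.trans hst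
  obtain ⟨s1, e1⟩ := ptl_expand B t X Y (fun n => (hg n Y X X' a hXX).1)
  obtain ⟨s2, e2⟩ := ptl_expand B t X' Y (fun n => (hg n Y X' X (a.1, dneg a.2) hXX2).1)
  obtain ⟨hPs, hPb⟩ := hP s hs0
  rw [← hs] at s1 s2 e1 e2
  have e : ptl t x y - ptl t (x + e11 d k) y = (∑' n : ℕ, (s^n / n.factorial * ((SX d k).K ^ n) (deltaFn Y) X -
      s^n / n.factorial * ((SX d k).K ^ n) (deltaFn Y) X')) * Real.exp (-s) := by
    rw [s1.tsum_sub s2, sub_mul, ← e1, ← e2]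
  have hb : |∑' n : ℕ, (s^n / n.factorial * ((SX d k).K ^ n) (deltaFn Y) X -
      s^n / n.factorial * ((SX d k).K ^ n) (deltaFn Y) X')| ≤ C1 * (C2 * Real.exp s * (s+1)^(-p)) := by
    have hterm : ∀ n : ℕ, ‖s^n / n.factorial * ((SX d k).K ^ n) (deltaFn Y) X -
        s^n / n.factorial * ((SX d k).K ^ n) (deltaFn Y) X'‖ ≤ C1 * (s^n / n.factorial * ((n:ℝ)+1)^(-p)) := by
      intro n
      have h1 := (hg n Y X X' a hXX).2
      rw [← mul_sub, norm_mul, Real.norm_of_nonneg (by positivity : 0 ≤ s^n / (n.factorial:ℝ)), Real.norm_eq_abs, abs_sub_comm]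
      calc _ ≤ s^n / n.factorial * (C1 * ((n:ℝ)+1)^(-p)) := by gcongr
        _ = _ := by ring
    refine (tsum_of_norm_bounded (hPs.mul_left C1).hasSum hterm).trans ?_
    rw [tsum_mul_left]
    gcongr
  have hsq : 0 < √t + 1 := by positivity
  have hfin : (s+1)^(-p) ≤ 2^p * (√t + 1)^(-(((k * d : ℕ) : ℝ) + θ)) := by
    have q1 : (√t + 1)^2 ≤ 2 * (s+1) := by
      have := Real.sq_sqrt ht
      nlinarith [sq_nonneg (√t - 1)]
    have q2 : ((√t + 1)^2)^p ≤ (2 * (s+1))^p := Real.rpow_le_rpow (by positivity) q1 hp0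
    have q3 : ((√t + 1)^2)^p = (√t + 1)^(((k * d : ℕ) : ℝ) + θ) := by
      rw [← Real.rpow_natCast, ← Real.rpow_mul hsq.le]; congr 1; rw [hp]; push_cast; ring
    rw [q3, Real.mul_rpow (by norm_num) (by linarith)] at q2
    rw [Real.rpow_neg (by linarith), Real.rpow_neg hsq.le, ← div_eq_mul_inv, ← one_div,
      div_le_div_iff₀ (Real.rpow_pos_of_pos (by linarith) _) (Real.rpow_pos_of_pos hsq _), one_mul]
    exact q2
  rw [e, abs_mul, abs_of_pos (Real.exp_pos _)]
  have hex : Real.exp s * Real.exp (-s) = 1 := by rw [← Real.exp_add]; simp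
  have hpos : 0 < (√t + 1)^(-(((k * d : ℕ) : ℝ) + θ)) := Real.rpow_pos_of_pos hsq _
  calc _ ≤ C1 * (C2 * Real.exp s * (s+1)^(-p)) * Real.exp (-s) := by gcongr
    _ = C1 * C2 * (s+1)^(-p) * (Real.exp s * Real.exp (-s)) := by ring
    _ = C1 * C2 * (s+1)^(-p) := by rw [hex, mul_one]
    _ ≤ C1 * C2 * (2^p * (√t + 1)^(-(((k * d : ℕ) : ℝ) + θ))) := by gcongr
    _ ≤ _ := by linarith

end SSEPPaper
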